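/- For every fixed ε > 0 there exists a constant β₀ = β₀(ε) > 0 such that for every 0 < β ≤ β₀ and every edge-probability function p = p(n) satisfying n·p(n) − ln n − ln ln n → ∞ the following holds with high probability for G sampled from G(n,p), with t = np/100: for every spanning subgraph H ⊆ G whose degree sequence satisfies d_H(v) ≤ d̃(t,ε)_v for every vertex v, the graph G − H contains a spanning subgraph Γ₀ ∈ 𝓛(n,β) with at most 2·10⁶·β·n²p edges; moreover, for every edge set E₀ ⊆ E(G), the graph Γ₀ + E₀ also belongs to 𝓛(n,β), with the same witnessing partition V = V₁ ∪ D_t(G). -/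

import Mathlib

open Filter Finset SimpleGraph
open scoped Classical

/-- The probability weight of a particular graph `G` on `[n]` under `G(n,p)`. -/
noncomputable def gnpWeight (n : ℕ) (p : ℝ) (G : SimpleGraph (Fin n)) : ℝ :=
  p ^ G.edgeFinset.card * (1 - p) ^ (n.choose 2 - G.edgeFinset.card)

/-- The probability that a random graph `G ~ G(n,p)` satisfies the predicate `A`. -/
noncomputable def gnpProb (n : ℕ) (p : ℝ) (A : SimpleGraph (Fin n) → Prop) : ℝ :=
  ∑ G : SimpleGraph (Fin n), if A G then gnpWeight n p G else 0

/-- A sequence of graph properties holds with high probability in `G(n, p n)`. -/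
def WHP (p : ℕ → ℝ) (A : ∀ n : ℕ, SimpleGraph (Fin n) → Prop) : Prop :=
  Tendsto (fun n => gnpProb n (p n) (A n)) atTop (nhds 1)

/-- Number of edges of a graph. -/
noncomputable def edgeCount {V : Type*} [Fintype V] (G : SimpleGraph V) : ℕ :=
  G.edgeFinset.card

/-- Number of edges with both endpoints in `U`. -/
noncomputable def eIn {V : Type*} [Fintype V] (G : SimpleGraph V) (U : Finset V) : ℕ :=
  (G.edgeFinset.filter (fun e => ∀ v ∈ e, v ∈ U)).card

/-- Number of edges with one endpoint in `U` and the other in `Z` (for disjoint `U`, `Z`). -/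
noncomputable def eBetween {V : Type*} [Fintype V] (G : SimpleGraph V) (U Z : Finset V) : ℕ :=
  ((U ×ˢ Z).filter (fun q => G.Adj q.1 q.2)).card

/-- External neighbourhood of a vertex set. -/
noncomputable def extNbhd {V : Type*} [Fintype V] (G : SimpleGraph V) (U : Finset V) : Finset V :=
  Finset.univ.filter (fun v => v ∉ U ∧ ∃ u ∈ U, G.Adj u v)

/-- `G` is an `(R, f)`-expander: every set `U` with `|U| ≤ R` satisfies `|N(U)| ≥ f(|U|)·|U|`. -/
def IsExpander {V : Type*} [Fintype V] (G : SimpleGraph V) (R : ℝ) (f : ℕ → ℝ) : Prop :=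
  ∀ U : Finset V, U.Nonempty → (U.card : ℝ) ≤ R →
    f U.card * U.card ≤ ((extNbhd G U).card : ℝ)

/-- The expansion function `f_β` on `{1, …, ⌊β n₁⌋}`. -/
noncomputable def fBeta (β : ℝ) (n1 : ℕ) (t : ℕ) : ℝ :=
  if t = Nat.floor (β * n1) then 2 * (1 + 39 * β) / (3 * β)
  else if (t : ℝ) < (n1 : ℝ) ^ (0.1 : ℝ) then Real.log n1 ^ (0.8 : ℝ)
  else 11

/-- `G₁` is `(n₁, d, β)`-quasi-random. -/
def QuasiRandom {V : Type*} [Fintype V] (G1 : SimpleGraph V) (n1 : ℕ) (d β : ℝ) : Prop :=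
  (∀ v : V, d / 150 ≤ (G1.degree v : ℝ)) ∧
  (∀ U : Finset V, (U.card : ℝ) < (n1 : ℝ) ^ (0.11 : ℝ) * Real.log n1 →
    (eIn G1 U : ℝ) ≤ d ^ (0.13 : ℝ) * U.card) ∧
  (∀ U : Finset V, (U.card : ℝ) < 12 * β * n1 →
    (eIn G1 U : ℝ) ≤ 50 * β * d * U.card) ∧
  (∀ U Z : Finset V, Disjoint U Z → U.card = Nat.floor (β * n1) →
    Z.card = Nat.floor ((1 / 3 - 27 * β) * n1) →
    (n1 : ℝ) * Real.log (Real.log n1) ≤ (eBetween G1 U Z : ℝ))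

/-- Longest path length in `G`. -/
noncomputable def longestPath {V : Type*} [Fintype V] (G : SimpleGraph V) : ℕ :=
  sSup {l : ℕ | ∃ (u v : V) (q : G.Walk u v), q.IsPath ∧ q.length = l}

/-- `{u, v}` is a booster with respect to `Γ`. -/
def IsBooster {V : Type*} [Fintype V] (Γ : SimpleGraph V) (u v : V) : Prop :=
  u ≠ v ∧ ¬ Γ.Adj u v ∧
    ((Γ ⊔ fromEdgeSet {s(u, v)}).IsHamiltonian ∨
      longestPath Γ < longestPath (Γ ⊔ fromEdgeSet {s(u, v)}))

/-- The booster set `B_Γ(v)`. -/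
noncomputable def boosterSet {V : Type*} [Fintype V] (Γ : SimpleGraph V) (v : V) : Finset V :=
  Finset.univ.filter (fun w => IsBooster Γ v w)

/-- Membership in the family `𝓛(n, β)` with witnessing partition `V = V₁ ∪ D`. -/
def InFamilyL (n : ℕ) (β : ℝ) (G : SimpleGraph (Fin n)) (V1 D : Finset (Fin n)) : Prop :=
  Disjoint V1 D ∧ V1 ∪ D = Finset.univ ∧
  ((D.card : ℝ) ≤ (n : ℝ) ^ (0.09 : ℝ)) ∧
  (∀ u ∈ D, 2 ≤ (G.neighborFinset u ∩ V1).card) ∧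
  (∀ u ∈ D, ∀ v ∈ D, ∀ q : G.Walk u v, q.IsPath → 0 < q.length →
    2 * Real.log n / (3 * Real.log (Real.log n)) < (q.length : ℝ)) ∧
  (∀ u ∈ D, ∀ q : G.Walk u u, q.IsCycle →
    2 * Real.log n / (3 * Real.log (Real.log n)) < (q.length : ℝ)) ∧
  IsExpander (G.induce (V1 : Set (Fin n))) (β * V1.card) (fBeta β V1.card)

/-- The set `D_t(G)` of vertices of degree less than `t`. -/
noncomputable def lowDegSet (n : ℕ) (t : ℝ) (G : SimpleGraph (Fin n)) : Finset (Fin n) :=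
  Finset.univ.filter (fun v => (G.degree v : ℝ) < t)

/- With high probability the vertices of degree less than `np / 100` are few and no short trail
joins two of them, small sets span few edges, and every cut between two large sets has about the
expected number of edges. As `H` takes less than a third of the degree at every other vertex,
`G - H` keeps a positive proportion of the edges of every large cut. Greedily, `O(n)` edges of
`G - H` hit all those cuts; adding two edges at each low-degree vertex and a multiple of `βnp`
edges at every other vertex gives `Γ₀`. A set of the remaining vertices with few neighbours
would be a small set spanning many edges or would miss a large cut, so these vertices expand.
None of this is lost when edges of `G` are added, because the sparsity used is that of
`G` itself. -/

section EdgeProducts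

variable {V R : Type*} [Fintype V] [DecidableEq V] [CommSemiring R]

lemma edgeFinset_fromEdgeSet_of_subset {s : Finset (Sym2 V)}
    {_ : Fintype (fromEdgeSet (s : Set (Sym2 V))).edgeSet}
    (hs : s ⊆ (⊤ : SimpleGraph V).edgeFinset) :
    (fromEdgeSet (s : Set (Sym2 V))).edgeFinset = s := by
  ext e
  have : e ∈ s → ¬ e.IsDiag := fun he => by simpa using hs he
  simpa using this

lemma sum_prod_edgeFinset_mul_prod_sdiff (x y : Sym2 V → R) :
    ∑ G : SimpleGraph V, (∏ e ∈ G.edgeFinset, x e) *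
        ∏ e ∈ (⊤ : SimpleGraph V).edgeFinset \ G.edgeFinset, y e
      = ∏ e ∈ (⊤ : SimpleGraph V).edgeFinset, (x e + y e) := by
  rw [Finset.prod_add]
  refine Finset.sum_bij' (fun G _ => G.edgeFinset)
    (fun s _ => fromEdgeSet (s : Set (Sym2 V)))
    (fun G _ => Finset.mem_powerset.2 (edgeFinset_mono le_top)) (fun _ _ => Finset.mem_univ _)
    (fun G _ => ?_) (fun s hs => ?_) (fun _ _ => rfl)
  · rw [coe_edgeFinset, fromEdgeSet_edgeSet]
  · exact edgeFinset_fromEdgeSet_of_subset (Finset.mem_powerset.1 hs)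

end EdgeProducts

section Gnp

variable {n : ℕ} {p : ℝ}

lemma gnpWeight_mul_prod (a b : Sym2 (Fin n) → ℝ) (G : SimpleGraph (Fin n)) :
    gnpWeight n p G * ((∏ e ∈ G.edgeFinset, a e) *
        ∏ e ∈ (⊤ : SimpleGraph (Fin n)).edgeFinset \ G.edgeFinset, b e)
      = (∏ e ∈ G.edgeFinset, p * a e) *
        ∏ e ∈ (⊤ : SimpleGraph (Fin n)).edgeFinset \ G.edgeFinset, (1 - p) * b e := by
  have card_compl : #((⊤ : SimpleGraph (Fin n)).edgeFinset \ G.edgeFinset)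
      = n.choose 2 - #G.edgeFinset := by
    rw [Finset.card_sdiff_of_subset (edgeFinset_mono le_top),
      card_edgeFinset_top_eq_card_choose_two, Fintype.card_fin]
  simp only [Finset.prod_mul_distrib, Finset.prod_const, card_compl, gnpWeight]
  ring

lemma sum_gnpWeight_mul_prod (p : ℝ) (a b : Sym2 (Fin n) → ℝ) :
    ∑ G : SimpleGraph (Fin n), gnpWeight n p G * ((∏ e ∈ G.edgeFinset, a e) *
        ∏ e ∈ (⊤ : SimpleGraph (Fin n)).edgeFinset \ G.edgeFinset, b e)
      = ∏ e ∈ (⊤ : SimpleGraph (Fin n)).edgeFinset, (p * a e + (1 - p) * b e) := by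
  simp only [gnpWeight_mul_prod, sum_prod_edgeFinset_mul_prod_sdiff]

lemma sum_gnpWeight (n : ℕ) (p : ℝ) : ∑ G : SimpleGraph (Fin n), gnpWeight n p G = 1 := by
  simpa using sum_gnpWeight_mul_prod (n := n) p 1 1

lemma gnpProb_add_gnpProb_not (n : ℕ) (p : ℝ) (A : SimpleGraph (Fin n) → Prop) :
    gnpProb n p A + gnpProb n p (fun G => ¬ A G) = 1 := by
  rw [← sum_gnpWeight n p, gnpProb, gnpProb, ← Finset.sum_add_distrib]
  exact Finset.sum_congr rfl fun G _ => by split_ifs <;> simp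

lemma gnpWeight_nonneg (hp : p ∈ Set.Icc (0 : ℝ) 1) (G : SimpleGraph (Fin n)) :
    0 ≤ gnpWeight n p G :=
  mul_nonneg (pow_nonneg hp.1 _) (pow_nonneg (sub_nonneg.2 hp.2) _)

lemma gnpProb_nonneg (hp : p ∈ Set.Icc (0 : ℝ) 1) (A : SimpleGraph (Fin n) → Prop) :
    0 ≤ gnpProb n p A :=
  Finset.sum_nonneg fun G _ => ite_nonneg (gnpWeight_nonneg hp G) le_rfl

lemma gnpProb_le_sum_gnpWeight_mul (hp : p ∈ Set.Icc (0 : ℝ) 1) {A : SimpleGraph (Fin n) → Prop}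
    {X : SimpleGraph (Fin n) → ℝ} (hX : ∀ G, 0 ≤ X G) (hAX : ∀ G, A G → 1 ≤ X G) :
    gnpProb n p A ≤ ∑ G, gnpWeight n p G * X G := by
  refine Finset.sum_le_sum fun G _ => ?_
  have hw := gnpWeight_nonneg hp G
  split_ifs with hA
  · exact le_mul_of_one_le_right hw (hAX G hA)
  · exact mul_nonneg hw (hX G)

lemma gnpProb_mono (hp : p ∈ Set.Icc (0 : ℝ) 1) {A B : SimpleGraph (Fin n) → Prop}
    (h : ∀ G, A G → B G) :
    gnpProb n p A ≤ gnpProb n p B := by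
  simp only [gnpProb, ← Finset.sum_filter]
  exact Finset.sum_le_sum_of_subset_of_nonneg (Finset.monotone_filter_right _ fun G _ => h G)
    fun G _ _ => gnpWeight_nonneg hp G

lemma gnpProb_exists_mem_le_sum (hp : p ∈ Set.Icc (0 : ℝ) 1) {ι : Type*} (s : Finset ι)
    (A : ι → SimpleGraph (Fin n) → Prop) :
    gnpProb n p (fun G => ∃ i ∈ s, A i G) ≤ ∑ i ∈ s, gnpProb n p (A i) := by
  have indicator_nonneg : ∀ G i, (0 : ℝ) ≤ if A i G then 1 else 0 :=
    fun G i => ite_nonneg zero_le_one le_rfl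
  calc gnpProb n p (fun G => ∃ i ∈ s, A i G)
      ≤ ∑ G, gnpWeight n p G * ∑ i ∈ s, (if A i G then 1 else 0) := by
        refine gnpProb_le_sum_gnpWeight_mul hp
          (fun G => Finset.sum_nonneg fun i _ => indicator_nonneg G i) ?_
        rintro G ⟨i, hi, hA⟩
        simpa [hA] using Finset.single_le_sum (fun j _ => indicator_nonneg G j) hi
    _ = ∑ i ∈ s, gnpProb n p (A i) := by
        simp only [gnpProb, Finset.mul_sum, mul_ite, mul_one, mul_zero]
        exact Finset.sum_comm

lemma gnpProb_exists_mem_le_card_mul (hp : p ∈ Set.Icc (0 : ℝ) 1) {ι : Type*} {s : Finset ι}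
    {A : ι → SimpleGraph (Fin n) → Prop} {b : ℝ} (h : ∀ i ∈ s, gnpProb n p (A i) ≤ b) :
    gnpProb n p (fun G => ∃ i ∈ s, A i G) ≤ #s * b :=
  (gnpProb_exists_mem_le_sum hp s A).trans <| by
    simpa [nsmul_eq_mul] using Finset.sum_le_card_nsmul s _ b h

lemma gnpProb_exists_and_le_mul (hp : p ∈ Set.Icc (0 : ℝ) 1) {ι : Type*} [Fintype ι]
    {C : ι → Prop} {A : ι → SimpleGraph (Fin n) → Prop} {N : ℕ} {b : ℝ}
    (hN : #(Finset.univ.filter C) ≤ N) (hb : 0 ≤ b) (h : ∀ i, C i → gnpProb n p (A i) ≤ b) :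
    gnpProb n p (fun G => ∃ i, C i ∧ A i G) ≤ N * b := by
  refine le_trans ?_ (mul_le_mul_of_nonneg_right (Nat.cast_le.2 hN) hb)
  simpa only [Finset.mem_filter, Finset.mem_univ, true_and]
    using gnpProb_exists_mem_le_card_mul hp (s := Finset.univ.filter C)
      fun i hi => h i (Finset.mem_filter.1 hi).2

lemma gnpProb_or_le (hp : p ∈ Set.Icc (0 : ℝ) 1) (A B : SimpleGraph (Fin n) → Prop) :
    gnpProb n p (fun G => A G ∨ B G) ≤ gnpProb n p A + gnpProb n p B := by
  simpa [add_comm] using gnpProb_exists_mem_le_sum hp Finset.univ fun i : Bool => if i then B else A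

lemma gnpProb_le_mul_prod (hp : p ∈ Set.Icc (0 : ℝ) 1) {A : SimpleGraph (Fin n) → Prop}
    {a b : Sym2 (Fin n) → ℝ} {C : ℝ} (hC : 0 ≤ C) (ha : ∀ e, 0 ≤ a e) (hb : ∀ e, 0 ≤ b e)
    (hA : ∀ G : SimpleGraph (Fin n), A G → 1 ≤ C * ((∏ e ∈ G.edgeFinset, a e) *
      ∏ e ∈ (⊤ : SimpleGraph (Fin n)).edgeFinset \ G.edgeFinset, b e)) :
    gnpProb n p A
      ≤ C * ∏ e ∈ (⊤ : SimpleGraph (Fin n)).edgeFinset, (p * a e + (1 - p) * b e) := by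
  refine (gnpProb_le_sum_gnpWeight_mul hp (fun G => mul_nonneg hC (mul_nonneg
    (Finset.prod_nonneg fun e _ => ha e) (Finset.prod_nonneg fun e _ => hb e))) hA).trans_eq ?_
  simp only [mul_left_comm _ C, ← Finset.mul_sum, sum_gnpWeight_mul_prod]

/- The weight of an edge outside `P` is tilted by `exp (c e)`, while graphs missing an edge of `P`
are discarded: the resulting expectation is a product over the edges. -/
lemma gnpProb_subset_and_le_sum_le (hp : p ∈ Set.Icc (0 : ℝ) 1) (P : Finset (Sym2 (Fin n)))
    (c : Sym2 (Fin n) → ℝ) (t : ℝ) :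
    gnpProb n p (fun G => P ⊆ G.edgeFinset ∧ t ≤ ∑ e ∈ G.edgeFinset \ P, c e)
      ≤ p ^ #P * Real.exp
          (-t + p * ∑ e ∈ (⊤ : SimpleGraph (Fin n)).edgeFinset \ P, (Real.exp (c e) - 1)) := by
  set E := (⊤ : SimpleGraph (Fin n)).edgeFinset
  by_cases hPE : P ⊆ E
  swap
  · refine (Finset.sum_eq_zero fun G _ => if_neg fun h => ?_).trans_le
      (mul_nonneg (pow_nonneg hp.1 _) (Real.exp_nonneg _))
    exact hPE (h.1.trans (edgeFinset_mono le_top))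
  let a : Sym2 (Fin n) → ℝ := fun e => if e ∈ P then 1 else Real.exp (c e)
  let b : Sym2 (Fin n) → ℝ := fun e => if e ∈ P then 0 else 1
  calc gnpProb n p (fun G => P ⊆ G.edgeFinset ∧ t ≤ ∑ e ∈ G.edgeFinset \ P, c e)
      ≤ Real.exp (-t) * ∏ e ∈ E, (p * a e + (1 - p) * b e) := by
        refine gnpProb_le_mul_prod hp (Real.exp_nonneg _)
          (fun e => ite_nonneg zero_le_one (Real.exp_nonneg _))
          (fun e => ite_nonneg le_rfl zero_le_one) ?_
        rintro G ⟨hPG, ht⟩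
        have prod_a : ∏ e ∈ G.edgeFinset, a e = Real.exp (∑ e ∈ G.edgeFinset \ P, c e) := by
          rw [Real.exp_sum, ← Finset.prod_sdiff hPG,
            Finset.prod_eq_one (s := P) fun e he => if_pos he, mul_one]
          exact Finset.prod_congr rfl fun e he => if_neg (Finset.mem_sdiff.1 he).2
        have prod_b : ∏ e ∈ E \ G.edgeFinset, b e = 1 :=
          Finset.prod_eq_one fun e he => if_neg fun heP => (Finset.mem_sdiff.1 he).2 (hPG heP)
        rw [prod_a, prod_b, mul_one, ← Real.exp_add]
        exact Real.one_le_exp (by linarith)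
    _ = Real.exp (-t) * (p ^ #P * ∏ e ∈ E \ P, (p * Real.exp (c e) + (1 - p))) := by
        rw [← Finset.prod_sdiff hPE, mul_comm (p ^ #P), ← Finset.prod_const]
        congr 2 <;> refine Finset.prod_congr rfl fun e he => ?_
        · simp [a, b, (Finset.mem_sdiff.1 he).2]
        · simp [a, b, he]
    _ ≤ Real.exp (-t) * (p ^ #P * ∏ e ∈ E \ P, Real.exp (p * (Real.exp (c e) - 1))) := by
        gcongr with e
        · exact pow_nonneg hp.1 _
        · exact fun e _ => add_nonneg (mul_nonneg hp.1 (Real.exp_nonneg _)) (sub_nonneg.2 hp.2)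
        · linarith [Real.add_one_le_exp (p * (Real.exp (c e) - 1))]
    _ = _ := by
        rw [← Real.exp_sum, ← Finset.mul_sum, Real.exp_add]
        ring

end Gnp

section EdgeCounts

variable {n : ℕ} {p : ℝ}

lemma gnpProb_subset_and_le_mul_card_le (hp : p ∈ Set.Icc (0 : ℝ) 1) {P S : Finset (Sym2 (Fin n))}
    (hS : S ⊆ (⊤ : SimpleGraph (Fin n)).edgeFinset) (hPS : Disjoint S P) (l t : ℝ) :
    gnpProb n p (fun G => P ⊆ G.edgeFinset ∧ t ≤ l * #(G.edgeFinset ∩ S))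
      ≤ p ^ #P * Real.exp (-t + p * (#S * (Real.exp l - 1))) := by
  have sum_indicator : ∀ (E : Finset (Sym2 (Fin n))) (x : ℝ),
      ∑ e ∈ E \ P, (if e ∈ S then x else 0) = #(E ∩ S) * x := by
    intro E x
    rw [Finset.sum_ite_mem, Finset.sum_const, nsmul_eq_mul, Finset.sdiff_inter_right_comm,
      Finset.sdiff_eq_self_of_disjoint (hPS.mono_left Finset.inter_subset_right)]
  have exp_indicator : ∀ e, Real.exp (if e ∈ S then l else 0) - 1
      = if e ∈ S then Real.exp l - 1 else 0 := fun e => by split_ifs <;> simp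
  have bound := gnpProb_subset_and_le_sum_le hp P (fun e => if e ∈ S then l else 0) t
  simpa only [sum_indicator, exp_indicator, Finset.inter_eq_right.2 hS, mul_comm _ l] using bound

lemma gnpProb_le_mul_card_le (hp : p ∈ Set.Icc (0 : ℝ) 1) {S : Finset (Sym2 (Fin n))}
    (hS : S ⊆ (⊤ : SimpleGraph (Fin n)).edgeFinset) (l t : ℝ) :
    gnpProb n p (fun G => t ≤ l * #(G.edgeFinset ∩ S))
      ≤ Real.exp (-t + p * (#S * (Real.exp l - 1))) := by
  simpa using gnpProb_subset_and_le_mul_card_le hp hS (Finset.disjoint_empty_right S) l t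

lemma gnpProb_le_card_le (hp : p ∈ Set.Icc (0 : ℝ) 1) {S : Finset (Sym2 (Fin n))}
    (hS : S ⊆ (⊤ : SimpleGraph (Fin n)).edgeFinset) {μ x : ℝ} (hμ : 0 < μ) (hSμ : #S * p ≤ μ)
    (hμx : μ ≤ x) :
    gnpProb n p (fun G => x ≤ #(G.edgeFinset ∩ S)) ≤ (Real.exp 1 * μ / x) ^ x := by
  have hx : 0 < x := hμ.trans_le hμx
  set l := Real.log (x / μ)
  have hl : 0 ≤ l := Real.log_nonneg ((one_le_div hμ).2 hμx)
  have exp_l : Real.exp l = x / μ := Real.exp_log (div_pos hx hμ)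
  have base_eq : Real.exp 1 * μ / x = Real.exp (1 - l) := by
    rw [Real.exp_sub, exp_l, div_div_eq_mul_div]
  have increment : p * (#S * (Real.exp l - 1)) ≤ x := calc
    p * (#S * (Real.exp l - 1)) = #S * p * (Real.exp l - 1) := by ring
    _ ≤ μ * (Real.exp l - 1) := by gcongr; exact sub_nonneg.2 (Real.one_le_exp hl)
    _ = x - μ := by rw [exp_l]; field_simp
    _ ≤ x := by linarith
  calc gnpProb n p (fun G => x ≤ #(G.edgeFinset ∩ S))
      ≤ gnpProb n p (fun G => l * x ≤ l * #(G.edgeFinset ∩ S)) :=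
        gnpProb_mono hp fun G hG => mul_le_mul_of_nonneg_left hG hl
    _ ≤ Real.exp (-(l * x) + p * (#S * (Real.exp l - 1))) := gnpProb_le_mul_card_le hp hS _ _
    _ ≤ Real.exp ((1 - l) * x) := Real.exp_le_exp.2 (by linarith)
    _ = (Real.exp 1 * μ / x) ^ x := by rw [base_eq, Real.exp_mul]

lemma gnpProb_card_le_le (hp : p ∈ Set.Icc (0 : ℝ) 1) {S : Finset (Sym2 (Fin n))}
    (hS : S ⊆ (⊤ : SimpleGraph (Fin n)).edgeFinset) {δ : ℝ} (hδ : 0 ≤ δ) :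
    gnpProb n p (fun G => #(G.edgeFinset ∩ S) ≤ (1 - δ) * (#S * p))
      ≤ Real.exp (-(δ ^ 2 / 2 * (#S * p))) := by
  have exp_neg_le : Real.exp (-δ) ≤ 1 - δ + δ ^ 2 / 2 := by
    rw [Real.exp_neg, inv_le_comm₀ (Real.exp_pos _) (by nlinarith)]
    refine le_trans ?_ (Real.quadratic_le_exp_of_nonneg hδ)
    rw [inv_le_iff_one_le_mul₀ (by nlinarith)]
    nlinarith [sq_nonneg δ, sq_nonneg (δ ^ 2)]
  have mean_nonneg : 0 ≤ #S * p := mul_nonneg (Nat.cast_nonneg _) hp.1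
  calc gnpProb n p (fun G => #(G.edgeFinset ∩ S) ≤ (1 - δ) * (#S * p))
      ≤ gnpProb n p (fun G => -δ * ((1 - δ) * (#S * p)) ≤ -δ * #(G.edgeFinset ∩ S)) :=
        gnpProb_mono hp fun G hG => mul_le_mul_of_nonpos_left hG (neg_nonpos.2 hδ)
    _ ≤ Real.exp (-(-δ * ((1 - δ) * (#S * p))) + p * (#S * (Real.exp (-δ) - 1))) :=
        gnpProb_le_mul_card_le hp hS _ _
    _ ≤ Real.exp (-(δ ^ 2 / 2 * (#S * p))) :=
        Real.exp_le_exp.2 (by nlinarith [mul_le_mul_of_nonneg_left exp_neg_le mean_nonneg])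

end EdgeCounts

section DegreeSums

lemma sum_card_filter_mem_eq_sum_degree {V : Type*} [Fintype V] [DecidableEq V]
    (G : SimpleGraph V) [DecidableRel G.Adj] (U : Finset V) :
    ∑ e ∈ G.edgeFinset, #{u ∈ U | u ∈ e} = ∑ u ∈ U, G.degree u := by
  refine (Finset.sum_card_bipartiteAbove_eq_sum_card_bipartiteBelow fun u e => u ∈ e).symm.trans
    (Finset.sum_congr rfl fun u _ => ?_)
  rw [← card_incidenceFinset_eq_degree, incidenceFinset_eq_filter]
  rfl

lemma card_filter_mem_sym2_le_two {V : Type*} [DecidableEq V] (U : Finset V) (e : Sym2 V) :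
    #{u ∈ U | u ∈ e} ≤ 2 := by
  induction e using Sym2.ind with
  | _ a b =>
    exact (Finset.card_le_card fun u hu => by simpa using (Finset.mem_filter.1 hu).2).trans
      (Finset.card_le_two (a := a) (b := b))

lemma sum_exp_mul_card_filter_mem_sub_one_le {V : Type*} [Fintype V] [DecidableEq V]
    (U : Finset V) {δ : ℝ} (hδ : 0 ≤ δ) (hδ1 : δ ≤ 1) :
    ∑ e ∈ (⊤ : SimpleGraph V).edgeFinset, (Real.exp (δ / 4 * #{u ∈ U | u ∈ e}) - 1)
      ≤ δ / 4 * (1 + δ / 2) * (#U * Fintype.card V) := by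
  have exp_sub_one_le : ∀ k : ℝ, 0 ≤ k → k ≤ 2 →
      Real.exp (δ / 4 * k) - 1 ≤ δ / 4 * (1 + δ / 2) * k := by
    intro k hk hk2
    have small : |δ / 4 * k| ≤ 1 := by
      rw [abs_of_nonneg (by positivity)]
      nlinarith
    have quadratic := (abs_le.1 (Real.abs_exp_sub_one_sub_id_le small)).2
    have : (δ / 4 * k) ^ 2 ≤ δ / 4 * k * (δ / 2) := by
      rw [sq]
      gcongr
      nlinarith
    linarith
  have sum_degree_le : ∑ u ∈ U, (⊤ : SimpleGraph V).degree u ≤ #U * Fintype.card V :=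
    Finset.sum_le_card_nsmul _ _ _ fun u _ => (degree_lt_card_verts u).le
  calc ∑ e ∈ (⊤ : SimpleGraph V).edgeFinset, (Real.exp (δ / 4 * #{u ∈ U | u ∈ e}) - 1)
      ≤ ∑ e ∈ (⊤ : SimpleGraph V).edgeFinset, δ / 4 * (1 + δ / 2) * (#{u ∈ U | u ∈ e} : ℝ) :=
        Finset.sum_le_sum fun e _ => exp_sub_one_le _ (Nat.cast_nonneg _)
          (by exact_mod_cast card_filter_mem_sym2_le_two U e)
    _ = δ / 4 * (1 + δ / 2) * ∑ u ∈ U, ((⊤ : SimpleGraph V).degree u : ℝ) := by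
        rw [← Finset.mul_sum]
        exact_mod_cast congrArg (fun k : ℕ => δ / 4 * (1 + δ / 2) * (k : ℝ))
          (sum_card_filter_mem_eq_sum_degree (⊤ : SimpleGraph V) U)
    _ ≤ δ / 4 * (1 + δ / 2) * (#U * Fintype.card V) := by
        gcongr
        exact_mod_cast sum_degree_le

variable {n : ℕ} {p : ℝ}

lemma gnpProb_le_sum_degree_le (hp : p ∈ Set.Icc (0 : ℝ) 1) (U : Finset (Fin n)) {δ : ℝ}
    (hδ : 0 ≤ δ) (hδ1 : δ ≤ 1) :
    gnpProb n p (fun G => (1 + δ) * (#U * (n * p)) ≤ ∑ u ∈ U, (G.degree u : ℝ))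
      ≤ Real.exp (-(δ ^ 2 / 8 * (#U * (n * p)))) := by
  let c : Sym2 (Fin n) → ℝ := fun e => δ / 4 * #{u ∈ U | u ∈ e}
  have sum_c : ∀ G : SimpleGraph (Fin n),
      ∑ e ∈ G.edgeFinset, c e = δ / 4 * ∑ u ∈ U, (G.degree u : ℝ) := by
    intro G
    rw [← Finset.mul_sum]
    exact_mod_cast congrArg (fun k : ℕ => δ / 4 * (k : ℝ)) (sum_card_filter_mem_eq_sum_degree G U)
  have total := sum_exp_mul_card_filter_mem_sub_one_le U hδ hδ1
  rw [Fintype.card_fin] at total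
  calc gnpProb n p (fun G => (1 + δ) * (#U * (n * p)) ≤ ∑ u ∈ U, (G.degree u : ℝ))
      ≤ gnpProb n p (fun G => ∅ ⊆ G.edgeFinset ∧
          δ / 4 * ((1 + δ) * (#U * (n * p))) ≤ ∑ e ∈ G.edgeFinset \ ∅, c e) := by
        refine gnpProb_mono hp fun G hG => ⟨Finset.empty_subset _, ?_⟩
        rw [Finset.sdiff_empty, sum_c]
        gcongr
    _ ≤ Real.exp (-(δ / 4 * ((1 + δ) * (#U * (n * p)))) +
          p * ∑ e ∈ (⊤ : SimpleGraph (Fin n)).edgeFinset, (Real.exp (c e) - 1)) := by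
        simpa only [Finset.card_empty, pow_zero, one_mul, Finset.sdiff_empty]
          using gnpProb_subset_and_le_sum_le hp ∅ c (δ / 4 * ((1 + δ) * (#U * (n * p))))
    _ ≤ Real.exp (-(δ ^ 2 / 8 * (#U * (n * p)))) :=
        Real.exp_le_exp.2 (by linarith [mul_le_mul_of_nonneg_left total hp.1])

end DegreeSums

section DenseSets

lemma choose_le_exp_one_mul_div_pow {s : ℕ} (n : ℕ) (hs : 0 < s) :
    (n.choose s : ℝ) ≤ (Real.exp 1 * n / s) ^ s := by
  have hf : (0 : ℝ) < s.factorial := by exact_mod_cast s.factorial_pos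
  have pow_le : (s : ℝ) ^ s ≤ Real.exp s * s.factorial :=
    (div_le_iff₀ hf).1 (Real.pow_div_factorial_le_exp (s : ℝ) (Nat.cast_nonneg s) s)
  calc (n.choose s : ℝ) ≤ (n : ℝ) ^ s / s.factorial := Nat.choose_le_pow_div s n
    _ ≤ Real.exp s * (n : ℝ) ^ s / (s : ℝ) ^ s := by
      rw [div_le_div_iff₀ hf (by positivity)]
      nlinarith [mul_le_mul_of_nonneg_left pow_le (pow_nonneg (Nat.cast_nonneg' n : (0 : ℝ) ≤ n) s)]
    _ = (Real.exp 1 * n / s) ^ s := by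
      rw [div_pow, mul_pow, ← Real.exp_nat_mul, mul_one]

lemma eIn_eq_card_inter_sym2 {V : Type*} [Fintype V] [DecidableEq V] (G : SimpleGraph V)
    (W : Finset V) : eIn G W = #(G.edgeFinset ∩ W.sym2) := by
  rw [eIn]
  congr 1
  ext e
  simp only [Finset.mem_filter, Finset.mem_inter, Finset.mem_sym2_iff]

lemma card_sym2_le_sq {V : Type*} (W : Finset V) : #W.sym2 ≤ #W ^ 2 := by
  rw [Finset.card_sym2, Nat.choose_two_right]
  exact Nat.div_le_of_le_mul (by rw [Nat.add_sub_cancel]; nlinarith)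

variable {n : ℕ} {p : ℝ}

lemma gnpProb_mul_card_le_eIn_le (h0 : 0 < p) (h1 : p ≤ 1) {W : Finset (Fin n)}
    (hW : W.Nonempty) {m : ℝ} (hm : p * #W ≤ m) :
    gnpProb n p (fun G => m * #W ≤ eIn G W) ≤ (Real.exp 1 * p * #W / m) ^ (m * #W) := by
  have hs : (0 : ℝ) < #W := by exact_mod_cast hW.card_pos
  have hS : #((⊤ : SimpleGraph (Fin n)).edgeFinset ∩ W.sym2) * p
      ≤ p * #W * #W := by
    have : (#((⊤ : SimpleGraph (Fin n)).edgeFinset ∩ W.sym2) : ℝ) ≤ #W ^ 2 := by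
      exact_mod_cast (Finset.card_le_card Finset.inter_subset_right).trans (card_sym2_le_sq W)
    nlinarith
  have chernoff := gnpProb_le_card_le ⟨h0.le, h1⟩ Finset.inter_subset_left
    (by positivity) hS (mul_le_mul_of_nonneg_right hm hs.le)
  simp only [← Finset.inter_assoc, Finset.inter_eq_left.2 (edgeFinset_mono le_top),
    ← eIn_eq_card_inter_sym2] at chernoff
  convert chernoff using 2
  rw [← mul_assoc, mul_div_mul_right _ _ hs.ne', mul_assoc]

/- There are at most `(e n / s) ^ s` sets of size `s`, so the bounds for them add up to `η ^ s`. -/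
lemma gnpProb_exists_finset_le (hp : p ∈ Set.Icc (0 : ℝ) 1)
    {A : Finset (Fin n) → SimpleGraph (Fin n) → Prop} {η : ℝ} (hη : 0 ≤ η) (hη2 : η ≤ 1 / 2)
    (h : ∀ W, W.Nonempty → gnpProb n p (A W) ≤ (η * #W / (Real.exp 1 * n)) ^ #W) :
    gnpProb n p (fun G => ∃ W, W.Nonempty ∧ A W G) ≤ 2 * η := by
  have union_size : ∀ s ∈ Finset.Ico 1 (n + 1),
      gnpProb n p (fun G => ∃ W ∈ Finset.powersetCard s Finset.univ, A W G) ≤ η ^ s := by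
    intro s hs
    obtain ⟨hs, hsn⟩ := Finset.mem_Ico.1 hs
    have hs' : (0 : ℝ) < s := by exact_mod_cast hs
    have hn : (0 : ℝ) < n := hs'.trans_le (by exact_mod_cast Nat.lt_succ_iff.1 hsn)
    calc gnpProb n p (fun G => ∃ W ∈ Finset.powersetCard s Finset.univ, A W G)
        ≤ n.choose s * (η * s / (Real.exp 1 * n)) ^ s := by
          refine (gnpProb_exists_mem_le_card_mul hp (b := (η * s / (Real.exp 1 * n)) ^ s)
            fun W hW => ?_).trans_eq (by simp)
          have hWs := (Finset.mem_powersetCard.1 hW).2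
          exact hWs ▸ h W (Finset.card_pos.1 (by omega))
      _ ≤ (Real.exp 1 * n / s) ^ s * (η * s / (Real.exp 1 * n)) ^ s := by
          gcongr
          exact choose_le_exp_one_mul_div_pow n hs
      _ = η ^ s := by
          rw [← mul_pow]
          congr 1
          field_simp
  calc gnpProb n p (fun G => ∃ W, W.Nonempty ∧ A W G)
      ≤ gnpProb n p (fun G => ∃ s ∈ Finset.Ico 1 (n + 1),
          ∃ W ∈ Finset.powersetCard s Finset.univ, A W G) := by
        refine gnpProb_mono hp ?_
        rintro G ⟨W, hW, hA⟩
        refine ⟨#W, Finset.mem_Ico.2 ⟨hW.card_pos, Nat.lt_succ_iff.2 ?_⟩, W, by simp, hA⟩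
        exact (Finset.card_le_univ W).trans_eq (Fintype.card_fin n)
    _ ≤ ∑ s ∈ Finset.Ico 1 (n + 1), η ^ s :=
        (gnpProb_exists_mem_le_sum hp _ _).trans (Finset.sum_le_sum union_size)
    _ ≤ η ^ 1 / (1 - η) := geom_sum_Ico_le_of_lt_one hη (by linarith)
    _ ≤ 2 * η := by
        rw [pow_one, div_le_iff₀ (by linarith)]
        nlinarith

lemma gnpProb_exists_mul_card_le_eIn_le (h0 : 0 < p) (h1 : p ≤ 1) {m s : ℝ} (hm : 1 ≤ m)
    (hs0 : 0 ≤ s) (hs : Real.exp 1 * p * s / m ≤ 1)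
    (hη : Real.exp 1 ^ 2 * (n * p) / m * (Real.exp 1 * p * s / m) ^ (m - 1) ≤ 1 / 2) :
    gnpProb n p (fun G => ∃ W : Finset (Fin n), W.Nonempty ∧ #W ≤ s ∧ m * #W ≤ eIn G W)
      ≤ 2 * (Real.exp 1 ^ 2 * (n * p) / m * (Real.exp 1 * p * s / m) ^ (m - 1)) := by
  have hp : p ∈ Set.Icc (0 : ℝ) 1 := ⟨h0.le, h1⟩
  have hm0 : 0 < m := by linarith
  set ρ := Real.exp 1 * p * s / m
  refine gnpProb_exists_finset_le hp (by positivity) hη fun W hW => ?_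
  have hW0 : (0 : ℝ) < #W := by exact_mod_cast hW.card_pos
  have hn : (0 : ℝ) < n :=
    hW0.trans_le (by exact_mod_cast (Finset.card_le_univ W).trans_eq (Fintype.card_fin n))
  by_cases hWs : (#W : ℝ) ≤ s
  swap
  · have event_empty : gnpProb n p (fun G => #W ≤ s ∧ m * #W ≤ eIn G W) = 0 :=
      Finset.sum_eq_zero fun G _ => if_neg fun hG => hWs hG.1
    rw [event_empty]
    positivity
  set x := Real.exp 1 * p * #W / m
  have hx : 0 < x := by positivity
  have hxρ : x ≤ ρ := by simp only [x, ρ]; gcongr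
  have mean_le : p * #W ≤ m := by
    have := (div_le_one hm0).1 (hxρ.trans hs)
    nlinarith [Real.one_le_exp zero_le_one, mul_pos h0 hW0]
  calc gnpProb n p (fun G => #W ≤ s ∧ m * #W ≤ eIn G W)
      ≤ gnpProb n p (fun G => m * #W ≤ eIn G W) := gnpProb_mono hp fun _ hG => hG.2
    _ ≤ x ^ (m * #W) := gnpProb_mul_card_le_eIn_le h0 h1 hW mean_le
    _ = (x * x ^ (m - 1)) ^ #W := by
        rw [Real.rpow_mul hx.le, Real.rpow_natCast, ← Real.rpow_one_add' hx.le (by linarith),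
          add_sub_cancel]
    _ ≤ (x * ρ ^ (m - 1)) ^ #W := by gcongr
    _ = _ := by
        simp only [x]
        field_simp

end DenseSets

section Cuts

/-- The pairs of distinct vertices with one end in `U` and the other in `Z`, as potential edges:
the slots counted by `eBetween` when `U` and `Z` are disjoint. -/
def crossPairs {V : Type*} [DecidableEq V] (U Z : Finset V) : Finset (Sym2 V) :=
  (U ×ˢ Z).image fun q => s(q.1, q.2)

lemma injOn_sym2_mk_product {V : Type*} {U Z : Finset V} (h : Disjoint U Z) :
    Set.InjOn (fun q : V × V => s(q.1, q.2)) (U ×ˢ Z : Finset (V × V)) := by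
  rintro ⟨a, b⟩ hab ⟨c, d⟩ hcd heq
  obtain ⟨ha, _⟩ := Finset.mem_product.1 (Finset.mem_coe.1 hab)
  obtain ⟨_, hd⟩ := Finset.mem_product.1 (Finset.mem_coe.1 hcd)
  rcases Sym2.eq_iff.1 heq with ⟨rfl, rfl⟩ | ⟨rfl, rfl⟩
  · rfl
  · exact absurd hd (Finset.disjoint_left.1 h ha)

lemma card_crossPairs {V : Type*} [DecidableEq V] {U Z : Finset V} (h : Disjoint U Z) :
    #(crossPairs U Z) = #U * #Z := by
  rw [crossPairs, Finset.card_image_of_injOn (injOn_sym2_mk_product h), Finset.card_product]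

lemma crossPairs_subset_edgeFinset_top {V : Type*} [Fintype V] [DecidableEq V]
    {U Z : Finset V} (h : Disjoint U Z) : crossPairs U Z ⊆ (⊤ : SimpleGraph V).edgeFinset := by
  intro e he
  obtain ⟨⟨a, b⟩, hab, rfl⟩ := Finset.mem_image.1 he
  obtain ⟨ha, hb⟩ := Finset.mem_product.1 hab
  rw [mem_edgeFinset, mem_edgeSet, top_adj]
  exact fun hne => Finset.disjoint_left.1 h ha (hne ▸ hb)

lemma card_edgeFinset_inter_crossPairs {V : Type*} [Fintype V] [DecidableEq V]
    (G : SimpleGraph V) {U Z : Finset V} (h : Disjoint U Z) :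
    #(G.edgeFinset ∩ crossPairs U Z) = eBetween G U Z := by
  have image_eq : G.edgeFinset ∩ crossPairs U Z
      = {q ∈ U ×ˢ Z | G.Adj q.1 q.2}.image fun q => s(q.1, q.2) := by
    ext e
    simp only [crossPairs, Finset.mem_inter, Finset.mem_image, Finset.mem_filter]
    constructor
    · rintro ⟨he, q, hq, rfl⟩
      exact ⟨q, ⟨hq, by simpa using he⟩, rfl⟩
    · rintro ⟨q, ⟨hq, hadj⟩, rfl⟩
      exact ⟨by simpa using hadj, q, hq, rfl⟩
  rw [image_eq, Finset.card_image_of_injOn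
    ((injOn_sym2_mk_product h).mono (Finset.coe_subset.2 (Finset.filter_subset _ _))), eBetween]

variable {n : ℕ} {p : ℝ}

lemma gnpProb_eBetween_le (hp : p ∈ Set.Icc (0 : ℝ) 1) {U Z : Finset (Fin n)} (h : Disjoint U Z)
    {δ : ℝ} (hδ : 0 ≤ δ) :
    gnpProb n p (fun G => eBetween G U Z ≤ (1 - δ) * (#U * #Z * p))
      ≤ Real.exp (-(δ ^ 2 / 2 * (#U * #Z * p))) := by
  simpa only [card_edgeFinset_inter_crossPairs _ h, card_crossPairs h, Nat.cast_mul]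
    using gnpProb_card_le_le hp (crossPairs_subset_edgeFinset_top h) hδ

lemma gnpProb_exists_eBetween_le (hp : p ∈ Set.Icc (0 : ℝ) 1) {δ θ : ℝ} (hδ : 0 ≤ δ) :
    gnpProb n p (fun G => ∃ q : Finset (Fin n) × Finset (Fin n),
        (Disjoint q.1 q.2 ∧ θ * n ^ 2 ≤ #q.1 * #q.2) ∧
        eBetween G q.1 q.2 ≤ (1 - δ) * (#q.1 * #q.2 * p))
      ≤ 4 ^ n * Real.exp (-(δ ^ 2 / 2 * (θ * n ^ 2 * p))) := by
  have card_pairs : Fintype.card (Finset (Fin n) × Finset (Fin n)) = 4 ^ n := by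
    rw [Fintype.card_prod, Fintype.card_finset, Fintype.card_fin, ← mul_pow,
      show 2 * 2 = 4 from rfl]
  refine (gnpProb_exists_and_le_mul hp ((Finset.card_le_univ _).trans_eq card_pairs)
    (Real.exp_nonneg _) fun q hq => (gnpProb_eBetween_le hp hq.1 hδ).trans
      (Real.exp_le_exp.2 (neg_le_neg ?_))).trans_eq (by rw [Nat.cast_pow, Nat.cast_ofNat])
  exact mul_le_mul_of_nonneg_left (mul_le_mul_of_nonneg_right hq.2 hp.1) (by positivity)

lemma gnpProb_exists_le_sum_degree_le (hp : p ∈ Set.Icc (0 : ℝ) 1) {δ θ : ℝ} (hδ : 0 ≤ δ)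
    (hδ1 : δ ≤ 1) :
    gnpProb n p (fun G => ∃ U : Finset (Fin n), θ * n ≤ #U ∧
        (1 + δ) * (#U * (n * p)) ≤ ∑ u ∈ U, (G.degree u : ℝ))
      ≤ 2 ^ n * Real.exp (-(δ ^ 2 / 8 * (θ * n * (n * p)))) := by
  have card_sets : Fintype.card (Finset (Fin n)) = 2 ^ n := by
    rw [Fintype.card_finset, Fintype.card_fin]
  refine (gnpProb_exists_and_le_mul hp ((Finset.card_le_univ _).trans_eq card_sets)
    (Real.exp_nonneg _) fun U hU => (gnpProb_le_sum_degree_le hp U hδ hδ1).trans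
      (Real.exp_le_exp.2 (neg_le_neg ?_))).trans_eq (by rw [Nat.cast_pow, Nat.cast_ofNat])
  have := hp.1
  gcongr

end Cuts

section LowDegrees

lemma card_edgeFinset_inter_crossPairs_le_sum_degree {V : Type*} [Fintype V] [DecidableEq V]
    (G : SimpleGraph V) (X Z : Finset V) :
    #(G.edgeFinset ∩ crossPairs X Z) ≤ ∑ u ∈ X, G.degree u := by
  have incident : G.edgeFinset ∩ crossPairs X Z ⊆ X.biUnion fun u => G.incidenceFinset u := by
    intro e he
    obtain ⟨heG, heX⟩ := Finset.mem_inter.1 he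
    obtain ⟨⟨u, v⟩, huv, rfl⟩ := Finset.mem_image.1 heX
    refine Finset.mem_biUnion.2 ⟨u, (Finset.mem_product.1 huv).1, ?_⟩
    rw [mem_incidenceFinset]
    exact ⟨mem_edgeFinset.1 heG, Sym2.mem_mk_left u v⟩
  simpa only [card_incidenceFinset_eq_degree]
    using (Finset.card_le_card incident).trans Finset.card_biUnion_le

variable {n : ℕ} {p : ℝ}

lemma gnpProb_subset_and_degree_lt_le (hp : p ∈ Set.Icc (0 : ℝ) 1) (P : Finset (Sym2 (Fin n)))
    (X : Finset (Fin n)) (t : ℝ) {l : ℝ} (hl : 0 ≤ l) :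
    gnpProb n p (fun G => P ⊆ G.edgeFinset ∧ ∀ u ∈ X, (G.degree u : ℝ) < t)
      ≤ p ^ #P * Real.exp
          (l * (#X * t) - (1 - Real.exp (-l)) * (#(crossPairs X Xᶜ \ P) * p)) := by
  have slots : crossPairs X Xᶜ \ P ⊆ (⊤ : SimpleGraph (Fin n)).edgeFinset :=
    Finset.sdiff_subset.trans (crossPairs_subset_edgeFinset_top disjoint_compl_right)
  calc gnpProb n p (fun G => P ⊆ G.edgeFinset ∧ ∀ u ∈ X, (G.degree u : ℝ) < t)
      ≤ gnpProb n p (fun G => P ⊆ G.edgeFinset ∧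
          -l * (#X * t) ≤ -l * #(G.edgeFinset ∩ (crossPairs X Xᶜ \ P))) := by
        refine gnpProb_mono hp fun G hG =>
          ⟨hG.1, mul_le_mul_of_nonpos_left ?_ (neg_nonpos.2 hl)⟩
        have count_le : #(G.edgeFinset ∩ (crossPairs X Xᶜ \ P)) ≤ ∑ u ∈ X, G.degree u :=
          (Finset.card_le_card (Finset.inter_subset_inter_left Finset.sdiff_subset)).trans
            (card_edgeFinset_inter_crossPairs_le_sum_degree G X Xᶜ)
        calc (#(G.edgeFinset ∩ (crossPairs X Xᶜ \ P)) : ℝ)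
            ≤ ∑ u ∈ X, (G.degree u : ℝ) := by exact_mod_cast count_le
          _ ≤ #X * t := by
            simpa using Finset.sum_le_card_nsmul X _ t fun u hu => (hG.2 u hu).le
    _ ≤ p ^ #P * Real.exp (-(-l * (#X * t)) +
          p * (#(crossPairs X Xᶜ \ P) * (Real.exp (-l) - 1))) :=
        gnpProb_subset_and_le_mul_card_le hp slots Finset.sdiff_disjoint _ _
    _ = _ := by
        congr 2
        ring

lemma gnpProb_subset_and_degree_lt_div_le (hp : p ∈ Set.Icc (0 : ℝ) 1) {P : Finset (Sym2 (Fin n))}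
    {X : Finset (Fin n)} (hX : X.Nonempty) (hPX : (#P + #X : ℝ) ≤ 0.001 * n) :
    gnpProb n p (fun G => P ⊆ G.edgeFinset ∧ ∀ u ∈ X, (G.degree u : ℝ) < n * p / 100)
      ≤ p ^ #P * Real.exp (-(0.94 * (#X * (n * p)))) := by
  have log_le : Real.log 128 ≤ 4.8525 := by
    rw [show (128 : ℝ) = 2 ^ 7 by norm_num, Real.log_pow]
    linarith [Real.log_two_lt_d9]
  have slots : 0.999 * (#X * n) ≤ (#(crossPairs X Xᶜ \ P) : ℝ) := by
    have cross : (#(crossPairs X Xᶜ) : ℝ) = #X * (n - #X) := by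
      rw [card_crossPairs disjoint_compl_right, Nat.cast_mul, Finset.card_compl, Fintype.card_fin,
        Nat.cast_sub ((Finset.card_le_univ X).trans_eq (Fintype.card_fin n))]
    have sdiff : (#(crossPairs X Xᶜ) : ℝ) - #P ≤ #(crossPairs X Xᶜ \ P) := by
      rw [sub_le_iff_le_add]
      exact_mod_cast tsub_le_iff_right.1 (Finset.le_card_sdiff P (crossPairs X Xᶜ))
    have hX1 : (1 : ℝ) ≤ #X := by exact_mod_cast hX.card_pos
    nlinarith [Nat.cast_nonneg (α := ℝ) #P]
  refine (gnpProb_subset_and_degree_lt_le hp P X _ (Real.log_nonneg (x := 128)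
    (by norm_num))).trans (mul_le_mul_of_nonneg_left (Real.exp_le_exp.2 ?_) (pow_nonneg hp.1 _))
  rw [Real.exp_neg, Real.exp_log (by norm_num)]
  have mean_nonneg : 0 ≤ #X * (n * p) := by have := hp.1; positivity
  nlinarith [mul_le_mul_of_nonneg_right slots hp.1, mul_le_mul_of_nonneg_right log_le mean_nonneg]

lemma gnpProb_lt_card_lowDegSet_le (hp : p ∈ Set.Icc (0 : ℝ) 1) {M : ℝ} (hM : 0 < M)
    (hn : 1 ≤ 0.001 * (n : ℝ)) :
    gnpProb n p (fun G => M < #(lowDegSet n (n * p / 100) G))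
      ≤ n * Real.exp (-(0.94 * (n * p))) / M := by
  have single (u : Fin n) : gnpProb n p (fun G => (G.degree u : ℝ) < n * p / 100)
      ≤ Real.exp (-(0.94 * (n * p))) := by
    simpa using gnpProb_subset_and_degree_lt_div_le hp (P := ∅) (Finset.singleton_nonempty u)
      (by simpa using hn)
  have expectation : ∑ G, gnpWeight n p G * #(lowDegSet n (n * p / 100) G)
      = ∑ u : Fin n, gnpProb n p (fun G => (G.degree u : ℝ) < n * p / 100) := by
    simp only [gnpProb, lowDegSet, Finset.card_filter, Nat.cast_sum, Finset.mul_sum, Nat.cast_ite,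
      Nat.cast_one, Nat.cast_zero, mul_ite, mul_one, mul_zero]
    exact Finset.sum_comm
  calc gnpProb n p (fun G => M < #(lowDegSet n (n * p / 100) G))
      ≤ ∑ G, gnpWeight n p G * (#(lowDegSet n (n * p / 100) G) / M) :=
        gnpProb_le_sum_gnpWeight_mul hp (fun G => by positivity)
          fun G hG => (one_le_div hM).2 hG.le
    _ = (∑ u : Fin n, gnpProb n p (fun G => (G.degree u : ℝ) < n * p / 100)) / M := by
        rw [← expectation, Finset.sum_div]
        exact Finset.sum_congr rfl fun G _ => (mul_div_assoc _ _ _).symm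
    _ ≤ n * Real.exp (-(0.94 * (n * p))) / M := by
        gcongr
        simpa using Finset.sum_le_card_nsmul Finset.univ _ _ fun u _ => single u

end LowDegrees

section Trails

/-- The pairs of consecutive entries of a vertex sequence `w 0, …, w ℓ`, that is, the edges of the
walk that it describes. -/
def consecutivePairs {V : Type*} [DecidableEq V] {ℓ : ℕ} (w : Fin (ℓ + 1) → V) :
    Finset (Sym2 V) :=
  Finset.univ.image fun i : Fin ℓ => s(w i.castSucc, w i.succ)

/-- The edges of `w` are distinct and belong to `G`, that is, `w` is a trail of `G`, and both ends
of `w` have degree less than `t`. -/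
def IsTrailBetweenLowDeg {V : Type*} [Fintype V] [DecidableEq V] {ℓ : ℕ} (t : ℝ)
    (w : Fin (ℓ + 1) → V) (G : SimpleGraph V) : Prop :=
  #(consecutivePairs w) = ℓ ∧ consecutivePairs w ⊆ G.edgeFinset ∧
    ∀ u ∈ ({w 0, w (Fin.last ℓ)} : Finset V), (G.degree u : ℝ) < t

lemma exists_isTrailBetweenLowDeg_of_isTrail {V : Type*} [Fintype V] [DecidableEq V]
    {G : SimpleGraph V} {u v : V} {q : G.Walk u v} (hq : q.IsTrail) {t : ℝ}
    (hu : (G.degree u : ℝ) < t) (hv : (G.degree v : ℝ) < t) :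
    ∃ w : Fin (q.length + 1) → V, IsTrailBetweenLowDeg t w G := by
  refine ⟨fun i => q.getVert i, ?_, ?_, by simp [hu, hv]⟩
  · rw [consecutivePairs, Finset.card_image_of_injective, Finset.card_univ, Fintype.card_fin]
    intro i j hij
    have hi : (i : ℕ) < q.edges.length := i.2.trans_eq q.length_edges.symm
    have hj : (j : ℕ) < q.edges.length := j.2.trans_eq q.length_edges.symm
    have same_edge : q.edges[(i : ℕ)] = q.edges[(j : ℕ)] := by
      simp only [Walk.getElem_edges]
      exact hij
    exact Fin.ext (hq.edges_nodup.getElem_inj_iff.1 same_edge)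
  · intro e he
    obtain ⟨i, _, rfl⟩ := Finset.mem_image.1 he
    exact mem_edgeFinset.2 (q.adj_getVert_succ i.2)

lemma card_filter_apply_zero_eq_apply_last_le (V : Type*) [Fintype V] {ℓ : ℕ} (hℓ : 0 < ℓ) :
    #{w : Fin (ℓ + 1) → V | w 0 = w (Fin.last ℓ)} ≤ Fintype.card V ^ ℓ := by
  calc #{w : Fin (ℓ + 1) → V | w 0 = w (Fin.last ℓ)}
      ≤ #(Finset.univ : Finset (Fin ℓ → V)) := by
        refine Finset.card_le_card_of_injOn (fun w i => w i.castSucc)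
          (fun _ _ => Finset.mem_univ _) fun w hw w' hw' heq => funext fun i => ?_
        induction i using Fin.lastCases with
        | last =>
          rw [← (Finset.mem_filter.1 hw).2, ← (Finset.mem_filter.1 hw').2]
          exact congrFun heq ⟨0, hℓ⟩
        | cast i => exact congrFun heq i
    _ = Fintype.card V ^ ℓ := by rw [Finset.card_univ, Fintype.card_fun, Fintype.card_fin]

variable {n : ℕ} {p : ℝ}

lemma gnpProb_isTrailBetweenLowDeg_le (hp : p ∈ Set.Icc (0 : ℝ) 1) {ℓ : ℕ}
    (hb : (ℓ + 2 : ℝ) ≤ 0.001 * n) (w : Fin (ℓ + 1) → Fin n) :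
    gnpProb n p (IsTrailBetweenLowDeg (n * p / 100) w)
      ≤ p ^ ℓ * Real.exp (-(0.94 * (#{w 0, w (Fin.last ℓ)} * (n * p)))) := by
  by_cases hcard : #(consecutivePairs w) = ℓ
  · have ends_le : (#{w 0, w (Fin.last ℓ)} : ℝ) ≤ 2 := by exact_mod_cast Finset.card_le_two
    have bound := gnpProb_subset_and_degree_lt_div_le hp (P := consecutivePairs w)
      (X := {w 0, w (Fin.last ℓ)}) (Finset.insert_nonempty _ _) (by rw [hcard]; linarith)
    rw [hcard] at bound
    exact (gnpProb_mono hp fun G hG => hG.2).trans bound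
  · refine (Finset.sum_eq_zero fun G _ => if_neg fun hG => hcard hG.1).trans_le ?_
    exact mul_nonneg (pow_nonneg hp.1 _) (Real.exp_nonneg _)

lemma gnpProb_exists_open_isTrailBetweenLowDeg_le (hp : p ∈ Set.Icc (0 : ℝ) 1) {ℓ : ℕ}
    (hb : (ℓ + 2 : ℝ) ≤ 0.001 * n) :
    gnpProb n p (fun G => ∃ w : Fin (ℓ + 1) → Fin n, w 0 ≠ w (Fin.last ℓ) ∧
        IsTrailBetweenLowDeg (n * p / 100) w G)
      ≤ (n ^ (ℓ + 1) : ℕ) * (p ^ ℓ * Real.exp (-(1.88 * (n * p)))) := by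
  have hp0 := hp.1
  refine gnpProb_exists_and_le_mul hp ((Finset.card_le_univ _).trans_eq (by simp))
    (by positivity) fun w hw => (gnpProb_isTrailBetweenLowDeg_le hp hb w).trans_eq ?_
  rw [Finset.card_pair hw]
  congr 3
  ring

lemma gnpProb_exists_closed_isTrailBetweenLowDeg_le (hp : p ∈ Set.Icc (0 : ℝ) 1) {ℓ : ℕ}
    (hℓ : 0 < ℓ) (hb : (ℓ + 2 : ℝ) ≤ 0.001 * n) :
    gnpProb n p (fun G => ∃ w : Fin (ℓ + 1) → Fin n, w 0 = w (Fin.last ℓ) ∧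
        IsTrailBetweenLowDeg (n * p / 100) w G)
      ≤ (n ^ ℓ : ℕ) * (p ^ ℓ * Real.exp (-(0.94 * (n * p)))) := by
  have hp0 := hp.1
  refine gnpProb_exists_and_le_mul hp
    ((card_filter_apply_zero_eq_apply_last_le (Fin n) hℓ).trans_eq (by rw [Fintype.card_fin]))
    (by positivity) fun w hw => (gnpProb_isTrailBetweenLowDeg_le hp hb w).trans_eq ?_
  rw [hw, Finset.pair_eq_singleton, Finset.card_singleton, Nat.cast_one, one_mul]

lemma gnpProb_exists_isTrail_length_eq_le (hp : p ∈ Set.Icc (0 : ℝ) 1) {ℓ : ℕ} (hℓ : 0 < ℓ)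
    (hb : (ℓ + 2 : ℝ) ≤ 0.001 * n) :
    gnpProb n p (fun G => ∃ (u v : Fin n) (q : G.Walk u v), q.IsTrail ∧ q.length = ℓ ∧
        (G.degree u : ℝ) < n * p / 100 ∧ (G.degree v : ℝ) < n * p / 100)
      ≤ (n * p) ^ ℓ * (n * Real.exp (-(1.88 * (n * p))) + Real.exp (-(0.94 * (n * p)))) := by
  calc gnpProb n p (fun G => ∃ (u v : Fin n) (q : G.Walk u v), q.IsTrail ∧ q.length = ℓ ∧
        (G.degree u : ℝ) < n * p / 100 ∧ (G.degree v : ℝ) < n * p / 100)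
      ≤ gnpProb n p (fun G => (∃ w : Fin (ℓ + 1) → Fin n, w 0 ≠ w (Fin.last ℓ) ∧
          IsTrailBetweenLowDeg (n * p / 100) w G) ∨ ∃ w : Fin (ℓ + 1) → Fin n,
          w 0 = w (Fin.last ℓ) ∧ IsTrailBetweenLowDeg (n * p / 100) w G) := by
        refine gnpProb_mono hp ?_
        rintro G ⟨u, v, q, hq, rfl, hu, hv⟩
        obtain ⟨w, hw⟩ := exists_isTrailBetweenLowDeg_of_isTrail hq hu hv
        by_cases h : w 0 = w (Fin.last _)
        · exact Or.inr ⟨w, h, hw⟩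
        · exact Or.inl ⟨w, h, hw⟩
    _ ≤ _ := (gnpProb_or_le hp _ _).trans (add_le_add
        (gnpProb_exists_open_isTrailBetweenLowDeg_le hp hb)
        (gnpProb_exists_closed_isTrailBetweenLowDeg_le hp hℓ hb))
    _ = _ := by
        push_cast
        ring

lemma gnpProb_exists_isTrail_length_le_le (hp : p ∈ Set.Icc (0 : ℝ) 1) {L : ℝ} (hL : 0 ≤ L)
    (hd : 1 ≤ n * p) (hb : L + 2 ≤ 0.001 * n) :
    gnpProb n p (fun G => ∃ (u v : Fin n) (q : G.Walk u v), q.IsTrail ∧ 0 < q.length ∧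
        q.length ≤ L ∧ (G.degree u : ℝ) < n * p / 100 ∧ (G.degree v : ℝ) < n * p / 100)
      ≤ L * ((n * p) ^ L *
          (n * Real.exp (-(1.88 * (n * p))) + Real.exp (-(0.94 * (n * p))))) := by
  calc gnpProb n p (fun G => ∃ (u v : Fin n) (q : G.Walk u v), q.IsTrail ∧ 0 < q.length ∧
        q.length ≤ L ∧ (G.degree u : ℝ) < n * p / 100 ∧ (G.degree v : ℝ) < n * p / 100)
      ≤ gnpProb n p (fun G => ∃ ℓ ∈ Finset.Icc 1 ⌊L⌋₊, ∃ (u v : Fin n) (q : G.Walk u v),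
          q.IsTrail ∧ q.length = ℓ ∧
          (G.degree u : ℝ) < n * p / 100 ∧ (G.degree v : ℝ) < n * p / 100) :=
        gnpProb_mono hp fun G ⟨u, v, q, hq, hpos, hle, hdeg⟩ =>
          ⟨q.length, Finset.mem_Icc.2 ⟨hpos, Nat.le_floor hle⟩, u, v, q, hq, rfl, hdeg⟩
    _ ≤ #(Finset.Icc 1 ⌊L⌋₊) * ((n * p) ^ L *
          (n * Real.exp (-(1.88 * (n * p))) + Real.exp (-(0.94 * (n * p))))) := by
        refine gnpProb_exists_mem_le_card_mul hp fun ℓ hℓ => ?_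
        obtain ⟨hpos, hfloor⟩ := Finset.mem_Icc.1 hℓ
        have hle : (ℓ : ℝ) ≤ L := (Nat.le_floor_iff hL).1 hfloor
        refine (gnpProb_exists_isTrail_length_eq_le hp hpos (by linarith)).trans ?_
        gcongr
        rw [← Real.rpow_natCast]
        exact Real.rpow_le_rpow_of_exponent_le hd hle
    _ ≤ _ := by
        gcongr
        rw [Nat.card_Icc, Nat.add_sub_cancel]
        exact Nat.floor_le hL

end Trails

section Whp

variable {p : ℕ → ℝ} {A B : ∀ n : ℕ, SimpleGraph (Fin n) → Prop}

lemma whp_iff_tendsto_gnpProb_not :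
    WHP p A ↔ Tendsto (fun n => gnpProb n (p n) fun G => ¬ A n G) atTop (nhds 0) := by
  have hA (n : ℕ) : gnpProb n (p n) (fun G => ¬ A n G) = 1 - gnpProb n (p n) (A n) :=
    eq_sub_of_add_eq' (gnpProb_add_gnpProb_not n (p n) (A n))
  simp only [WHP, hA]
  exact ⟨fun h => by simpa using h.const_sub 1, fun h => by simpa using h.const_sub 1⟩

lemma WHP.of_gnpProb_le (hp : ∀ n, p n ∈ Set.Icc (0 : ℝ) 1) {b : ℕ → ℝ}
    (hb : Tendsto b atTop (nhds 0)) (hAB : ∀ n G, ¬ A n G → B n G)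
    (h : ∀ᶠ n in atTop, gnpProb n (p n) (B n) ≤ b n) :
    WHP p A :=
  whp_iff_tendsto_gnpProb_not.2 <|
    squeeze_zero' (Eventually.of_forall fun n => gnpProb_nonneg (hp n) _)
      (h.mono fun n hn => (gnpProb_mono (hp n) (hAB n)).trans hn) hb

lemma WHP.and (hp : ∀ n, p n ∈ Set.Icc (0 : ℝ) 1) (hA : WHP p A) (hB : WHP p B) :
    WHP p fun n G => A n G ∧ B n G :=
  .of_gnpProb_le hp
    (by simpa using (whp_iff_tendsto_gnpProb_not.1 hA).add (whp_iff_tendsto_gnpProb_not.1 hB))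
    (fun _ _ => not_and_or.1) (Eventually.of_forall fun n => gnpProb_or_le (hp n) _ _)

lemma WHP.mono (hp : ∀ n, p n ∈ Set.Icc (0 : ℝ) 1) (hA : WHP p A)
    (hAB : ∀ᶠ n in atTop, ∀ G, A n G → B n G) : WHP p B :=
  .of_gnpProb_le hp (whp_iff_tendsto_gnpProb_not.1 hA) (fun _ _ => id)
    (hAB.mono fun n hn => gnpProb_mono (hp n) fun G => mt (hn G))

end Whp

section TypicalProperties

lemma tendsto_log_natCast_atTop : Tendsto (fun n : ℕ => Real.log n) atTop atTop :=
  Real.tendsto_log_atTop.comp tendsto_natCast_atTop_atTop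

lemma tendsto_natCast_rpow_atTop {a : ℝ} (ha : 0 < a) :
    Tendsto (fun n : ℕ => (n : ℝ) ^ a) atTop atTop :=
  (tendsto_rpow_atTop ha).comp tendsto_natCast_atTop_atTop

lemma tendsto_natCast_rpow_neg {a : ℝ} (ha : 0 < a) :
    Tendsto (fun n : ℕ => (n : ℝ) ^ (-a)) atTop (nhds 0) :=
  (tendsto_rpow_neg_atTop ha).comp tendsto_natCast_atTop_atTop

lemma eventually_log_natCast_le_mul_rpow {a c : ℝ} (ha : 0 < a) (hc : 0 < c) :
    ∀ᶠ n : ℕ in atTop, Real.log n ≤ c * (n : ℝ) ^ a := by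
  filter_upwards [tendsto_natCast_atTop_atTop.eventually ((isLittleO_log_rpow_atTop ha).bound hc)]
    with n hn
  rw [Real.norm_of_nonneg (by positivity : (0 : ℝ) ≤ (n : ℝ) ^ a)] at hn
  exact (Real.le_norm_self _).trans hn

lemma tendsto_pow_mul_exp_neg {d : ℕ → ℝ} (hd : Tendsto d atTop atTop) {b c : ℝ} (hb : 0 < b)
    (hc : 0 < c) : Tendsto (fun n : ℕ => b ^ n * Real.exp (-(c * (n * d n)))) atTop (nhds 0) := by
  refine squeeze_zero' (Eventually.of_forall fun n => by positivity) ?_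
    (Real.tendsto_exp_neg_atTop_nhds_zero.comp tendsto_natCast_atTop_atTop)
  filter_upwards [hd.eventually_ge_atTop ((Real.log b + 1) / c)] with n hn
  rw [div_le_iff₀' hc] at hn
  calc b ^ n * Real.exp (-(c * (n * d n)))
      = Real.exp (n * (Real.log b - c * d n)) := by
        rw [← Real.exp_log (pow_pos hb n), Real.log_pow, ← Real.exp_add]
        ring_nf
    _ ≤ Real.exp (-(n : ℝ)) :=
        Real.exp_le_exp.2 (by nlinarith [Nat.cast_nonneg (α := ℝ) n])

lemma two_mul_div_three_mul_log_le {l : ℝ} (hl : 0 ≤ l) (hll : 1 ≤ Real.log l) :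
    2 * l / (3 * Real.log l) ≤ l := by
  rw [div_le_iff₀ (by linarith)]
  nlinarith

/- With `d = l * x`, the bound `log x ≤ x - 1` gives
`log d * (2 * l / (3 * log l)) ≤ 2 / 3 * l + 2 / (3 * log l) * (d - l)`. -/
lemma rpow_two_mul_div_log_le_exp {d l : ℝ} (hl : 0 < l) (hll : 7 ≤ Real.log l) (hd : l ≤ d) :
    d ^ (2 * l / (3 * Real.log l)) ≤ Real.exp (2 / 3 * l + 0.1 * (d - l)) := by
  have hd0 : 0 < d := hl.trans_le hd
  have hlog : Real.log d ≤ Real.log l + (d / l - 1) := by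
    have := Real.log_le_sub_one_of_pos (div_pos hd0 hl)
    rw [Real.log_div hd0.ne' hl.ne'] at this
    linarith
  rw [Real.rpow_def_of_pos hd0]
  refine Real.exp_le_exp.2 ?_
  calc Real.log d * (2 * l / (3 * Real.log l))
      ≤ (Real.log l + (d / l - 1)) * (2 * l / (3 * Real.log l)) := by gcongr
    _ = 2 / 3 * l + 2 / (3 * Real.log l) * (d - l) := by field_simp
    _ ≤ 2 / 3 * l + 0.1 * (d - l) := by
        gcongr
        rw [div_le_iff₀ (by linarith)]
        linarith

lemma trail_bound_le_mul_exp {d l : ℝ} (hl : 0 < l) (hll : 7 ≤ Real.log l) (hd : l ≤ d) :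
    2 * l / (3 * Real.log l) * (d ^ (2 * l / (3 * Real.log l)) *
      (Real.exp l * Real.exp (-(1.88 * d)) + Real.exp (-(0.94 * d)))) ≤
      l * (2 * Real.exp (-(0.2 * l))) := by
  have hd0 : 0 < d := hl.trans_le hd
  refine mul_le_mul (two_mul_div_three_mul_log_le hl.le (by linarith)) ?_ (by positivity) hl.le
  calc d ^ (2 * l / (3 * Real.log l)) *
        (Real.exp l * Real.exp (-(1.88 * d)) + Real.exp (-(0.94 * d)))
      ≤ Real.exp (2 / 3 * l + 0.1 * (d - l)) *
        (Real.exp l * Real.exp (-(1.88 * d)) + Real.exp (-(0.94 * d))) := by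
        gcongr
        exact rpow_two_mul_div_log_le_exp hl hll hd
    _ = Real.exp (2 / 3 * l + 0.1 * (d - l) + (l + -(1.88 * d))) +
        Real.exp (2 / 3 * l + 0.1 * (d - l) + -(0.94 * d)) := by
        rw [mul_add, ← Real.exp_add l, ← Real.exp_add, ← Real.exp_add]
    _ ≤ Real.exp (-(0.2 * l)) + Real.exp (-(0.2 * l)) := by
        gcongr <;> linarith
    _ = 2 * Real.exp (-(0.2 * l)) := (two_mul _).symm

lemma exp_one_mul_mul_rpow_div_le {x q : ℝ} (hx : 1 ≤ x) (hx3 : 3 ≤ x ^ (0.01 : ℝ)) (hq : 0 < q)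
    (hq1 : q ≤ 1) :
    Real.exp 1 * q * x ^ (0.11 : ℝ) / (x * q) ^ (0.15 : ℝ) ≤ x ^ (-0.03 : ℝ) := by
  have hx0 : 0 < x := by linarith
  have he : Real.exp 1 ≤ x ^ (0.01 : ℝ) := by linarith [Real.exp_one_lt_d9]
  have hq' : q ≤ q ^ (0.15 : ℝ) := Real.self_le_rpow_of_le_one hq.le hq1 (by norm_num)
  rw [div_le_iff₀ (by positivity), Real.mul_rpow hx0.le hq.le]
  calc Real.exp 1 * q * x ^ (0.11 : ℝ)
      ≤ x ^ (0.01 : ℝ) * q ^ (0.15 : ℝ) * x ^ (0.11 : ℝ) := by gcongr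
    _ = x ^ (-0.03 : ℝ) * (x ^ (0.15 : ℝ) * q ^ (0.15 : ℝ)) := by
        rw [mul_right_comm, ← mul_assoc, ← Real.rpow_add hx0, ← Real.rpow_add hx0]
        norm_num

lemma exp_one_sq_mul_div_mul_rpow_le {x q : ℝ} (hx : 1 ≤ x) (hx3 : 3 ≤ x ^ (0.01 : ℝ))
    (hq : 0 < q) (hq1 : q ≤ 1) (hm : 101 ≤ (x * q) ^ (0.15 : ℝ)) :
    Real.exp 1 ^ 2 * (x * q) / (x * q) ^ (0.15 : ℝ) *
      (Real.exp 1 * q * x ^ (0.11 : ℝ) / (x * q) ^ (0.15 : ℝ)) ^ ((x * q) ^ (0.15 : ℝ) - 1) ≤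
      9 * x ^ (-2 : ℝ) := by
  have hx0 : 0 < x := by linarith
  have he : Real.exp 1 ^ 2 ≤ 9 := by
    nlinarith [Real.exp_one_lt_d9, Real.exp_pos 1]
  have hρ := exp_one_mul_mul_rpow_div_le hx hx3 hq hq1
  set m := (x * q) ^ (0.15 : ℝ)
  calc Real.exp 1 ^ 2 * (x * q) / m * (Real.exp 1 * q * x ^ (0.11 : ℝ) / m) ^ (m - 1)
      ≤ 9 * (x * 1) / 1 * (x ^ (-0.03 : ℝ)) ^ (m - 1) := by
        gcongr <;> linarith
    _ ≤ 9 * (x * 1) / 1 * (x ^ (-0.03 : ℝ)) ^ (100 : ℝ) := by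
        gcongr 9 * (x * 1) / 1 * ?_
        exact Real.rpow_le_rpow_of_exponent_ge (by positivity)
          (Real.rpow_le_one_of_one_le_of_nonpos hx (by norm_num)) (by linarith)
    _ = 9 * x ^ (-2 : ℝ) := by
        rw [← Real.rpow_mul hx0.le, mul_one, div_one, mul_assoc, ← Real.rpow_one_add' hx0.le]
        all_goals norm_num

variable {p : ℕ → ℝ}

lemma whp_card_lowDegSet_le (hp : ∀ n, p n ∈ Set.Icc (0 : ℝ) 1)
    (hd : ∀ᶠ n : ℕ in atTop, Real.log n ≤ n * p n) :
    WHP p fun n G => (#(lowDegSet n (n * p n / 100) G) : ℝ) ≤ (n : ℝ) ^ (0.09 : ℝ) := by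
  refine .of_gnpProb_le hp (tendsto_natCast_rpow_neg (a := 0.03) (by norm_num))
    (fun _ _ => not_le.1) ?_
  filter_upwards [hd, eventually_ge_atTop 1000] with n hd hn
  have hn' : (1000 : ℝ) ≤ n := mod_cast hn
  have hn0 : (0 : ℝ) < n := by linarith
  refine (gnpProb_lt_card_lowDegSet_le (hp n) (by positivity) (by linarith)).trans ?_
  have hexp : Real.exp (-(0.94 * (n * p n))) ≤ (n : ℝ) ^ (-0.94 : ℝ) := by
    rw [Real.rpow_def_of_pos hn0]
    exact Real.exp_le_exp.2 (by linarith)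
  calc (n : ℝ) * Real.exp (-(0.94 * (n * p n))) / (n : ℝ) ^ (0.09 : ℝ)
      ≤ (n : ℝ) ^ (1 : ℝ) * (n : ℝ) ^ (-0.94 : ℝ) / (n : ℝ) ^ (0.09 : ℝ) := by
        rw [Real.rpow_one]
        gcongr
    _ = (n : ℝ) ^ (-(0.03 : ℝ)) := by
        rw [← Real.rpow_add hn0, ← Real.rpow_sub hn0]
        norm_num

lemma whp_lt_length_of_isTrail (hp : ∀ n, p n ∈ Set.Icc (0 : ℝ) 1)
    (hd : ∀ᶠ n : ℕ in atTop, Real.log n ≤ n * p n) :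
    WHP p fun n G => ∀ u ∈ lowDegSet n (n * p n / 100) G, ∀ v ∈ lowDegSet n (n * p n / 100) G,
      ∀ q : G.Walk u v, q.IsTrail → 0 < q.length →
        2 * Real.log n / (3 * Real.log (Real.log n)) < q.length := by
  have hlim : Tendsto (fun n : ℕ => Real.log n * (2 * Real.exp (-(0.2 * Real.log n)))) atTop
      (nhds 0) := by
    have h := (tendsto_rpow_mul_exp_neg_mul_atTop_nhds_zero 1 0.2 (by norm_num)).comp
      tendsto_log_natCast_atTop
    refine (mul_zero (2 : ℝ) ▸ h.const_mul 2).congr fun n => ?_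
    simp only [Function.comp, Real.rpow_one, neg_mul]
    ring
  refine .of_gnpProb_le hp hlim (B := fun n G => ∃ u v, ∃ q : G.Walk u v, q.IsTrail ∧
    0 < q.length ∧ (q.length : ℝ) ≤ 2 * Real.log n / (3 * Real.log (Real.log n)) ∧
    (G.degree u : ℝ) < n * p n / 100 ∧ (G.degree v : ℝ) < n * p n / 100) (fun n G h => ?_) ?_
  · simp only [lowDegSet, mem_filter_univ] at h
    push Not at h
    obtain ⟨u, hu, v, hv, q, hq, hq0, hqL⟩ := h
    exact ⟨u, v, q, hq, hq0, hqL, hu, hv⟩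
  filter_upwards [hd, eventually_ge_atTop 4000,
    eventually_log_natCast_le_mul_rpow (a := 1) (c := 0.0005) one_pos (by norm_num),
    tendsto_log_natCast_atTop.eventually_ge_atTop 1,
    (Real.tendsto_log_atTop.comp tendsto_log_natCast_atTop).eventually_ge_atTop 7]
    with n hd hn hlog hl hll
  have hn' : (4000 : ℝ) ≤ n := mod_cast hn
  rw [Function.comp_apply] at hll
  rw [Real.rpow_one] at hlog
  have hL := two_mul_div_three_mul_log_le (zero_le_one.trans hl) (by linarith)
  refine (gnpProb_exists_isTrail_length_le_le (hp n) (by positivity) (by linarith)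
    (by linarith)).trans ?_
  simpa only [Real.exp_log (show (0 : ℝ) < n by linarith)]
    using trail_bound_le_mul_exp (l := Real.log n) (by linarith) hll hd

lemma whp_eIn_lt_rpow_mul_card (hp : ∀ n, p n ∈ Set.Icc (0 : ℝ) 1)
    (hd : Tendsto (fun n : ℕ => n * p n) atTop atTop) :
    WHP p fun n G => ∀ W : Finset (Fin n), W.Nonempty → (#W : ℝ) ≤ (n : ℝ) ^ (0.11 : ℝ) →
      (eIn G W : ℝ) < (n * p n) ^ (0.15 : ℝ) * #W := by
  have hlim : Tendsto (fun n : ℕ => 2 * (9 * (n : ℝ) ^ (-2 : ℝ))) atTop (nhds 0) := by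
    simpa using ((tendsto_natCast_rpow_neg two_pos).const_mul 9).const_mul 2
  refine .of_gnpProb_le hp hlim (fun n G h => by push Not at h; exact h) ?_
  filter_upwards [eventually_ge_atTop 6,
    (tendsto_natCast_rpow_atTop (a := 0.01) (by norm_num)).eventually_ge_atTop 3,
    ((tendsto_rpow_atTop (y := 0.15) (by norm_num)).comp hd).eventually_ge_atTop 101,
    hd.eventually_gt_atTop 0] with n hn hn3 hm hd0
  have hn' : (6 : ℝ) ≤ n := mod_cast hn
  have hp0 : 0 < p n := pos_of_mul_pos_right hd0 n.cast_nonneg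
  rw [Function.comp_apply] at hm
  have hρ := exp_one_mul_mul_rpow_div_le (by linarith) hn3 hp0 (hp n).2
  have hη := exp_one_sq_mul_div_mul_rpow_le (by linarith) hn3 hp0 (hp n).2 hm
  have hn2 : 9 * (n : ℝ) ^ (-2 : ℝ) ≤ 1 / 2 := by
    rw [Real.rpow_neg n.cast_nonneg, Real.rpow_two, ← div_eq_mul_inv, div_le_iff₀ (by positivity)]
    nlinarith
  exact (gnpProb_exists_mul_card_le_eIn_le hp0 (hp n).2 (by linarith) (by positivity)
    (hρ.trans (Real.rpow_le_one_of_one_le_of_nonpos (by linarith) (by norm_num)))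
    (hη.trans hn2)).trans (by gcongr)

lemma whp_eIn_lt_mul_card (hp : ∀ n, p n ∈ Set.Icc (0 : ℝ) 1)
    (hd : Tendsto (fun n : ℕ => n * p n) atTop atTop) {β : ℝ} (hβ : 0 < β) :
    WHP p fun n G => ∀ W : Finset (Fin n), W.Nonempty → (#W : ℝ) ≤ 12 * (β * n) →
      (eIn G W : ℝ) < 50 * β * (n * p n) * #W := by
  have hm : Tendsto (fun n : ℕ => 50 * β * (n * p n)) atTop atTop :=
    hd.const_mul_atTop (by positivity)
  have he0 : -1 < 12 * Real.exp 1 / 50 := by linarith [Real.exp_pos 1]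
  have he : 12 * Real.exp 1 / 50 < 1 := by linarith [Real.exp_one_lt_d9]
  have hη : Tendsto (fun n : ℕ => Real.exp 1 ^ 2 / (50 * β) *
      (12 * Real.exp 1 / 50) ^ (50 * β * (n * p n) - 1)) atTop (nhds 0) := by
    have h := ((tendsto_rpow_atTop_of_base_lt_one _ he0 he).comp
      (tendsto_atTop_add_const_right _ (-1) hm)).const_mul (Real.exp 1 ^ 2 / (50 * β))
    rwa [mul_zero] at h
  refine .of_gnpProb_le hp (by simpa only [mul_zero] using hη.const_mul 2)
    (fun n G h => by push Not at h; exact h) ?_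
  filter_upwards [hd.eventually_gt_atTop 0, hm.eventually_ge_atTop 1,
    hη.eventually_le_const (show (0 : ℝ) < 1 / 2 by norm_num)] with n hd0 hm1 hη2
  have hp0 : 0 < p n := pos_of_mul_pos_right hd0 n.cast_nonneg
  have hn0 : (0 : ℝ) < n := pos_of_mul_pos_left hd0 hp0.le
  have hρ_eq : Real.exp 1 * p n * (12 * (β * n)) / (50 * β * (n * p n)) =
      12 * Real.exp 1 / 50 := by
    field_simp
  have hη_eq : Real.exp 1 ^ 2 * (n * p n) / (50 * β * (n * p n)) = Real.exp 1 ^ 2 / (50 * β) := by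
    field_simp
  have hle := gnpProb_exists_mul_card_le_eIn_le (n := n) (s := 12 * (β * n)) hp0 (hp n).2 hm1
    (by positivity)
  rw [hρ_eq, hη_eq] at hle
  exact hle he.le hη2

lemma whp_lt_eBetween (hp : ∀ n, p n ∈ Set.Icc (0 : ℝ) 1)
    (hd : Tendsto (fun n : ℕ => n * p n) atTop atTop) {δ θ : ℝ} (hδ : 0 < δ) (hθ : 0 < θ) :
    WHP p fun n G => ∀ U Z : Finset (Fin n), Disjoint U Z → θ * (n : ℝ) ^ 2 ≤ #U * #Z →
      (1 - δ) * (#U * #Z * p n) < (eBetween G U Z : ℝ) := by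
  refine .of_gnpProb_le hp (tendsto_pow_mul_exp_neg hd (b := 4) (c := δ ^ 2 / 2 * θ) (by norm_num)
    (by positivity)) (fun n G h => ?_)
    (Eventually.of_forall fun n => (gnpProb_exists_eBetween_le (hp n) hδ.le (θ := θ)).trans_eq ?_)
  · push Not at h
    obtain ⟨U, Z, hUZ, hθ, hle⟩ := h
    exact ⟨(U, Z), ⟨hUZ, hθ⟩, hle⟩
  · ring_nf

lemma whp_sum_degree_lt (hp : ∀ n, p n ∈ Set.Icc (0 : ℝ) 1)
    (hd : Tendsto (fun n : ℕ => n * p n) atTop atTop) {δ θ : ℝ} (hδ : 0 < δ) (hδ1 : δ ≤ 1)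
    (hθ : 0 < θ) :
    WHP p fun n G => ∀ U : Finset (Fin n), θ * n ≤ #U →
      ∑ u ∈ U, (G.degree u : ℝ) < (1 + δ) * (#U * (n * p n)) := by
  refine .of_gnpProb_le hp (tendsto_pow_mul_exp_neg hd (b := 2) (c := δ ^ 2 / 8 * θ) (by norm_num)
    (by positivity)) (fun n G h => by push Not at h; exact h)
    (Eventually.of_forall fun n =>
      (gnpProb_exists_le_sum_degree_le (hp n) hδ.le hδ1 (θ := θ)).trans_eq ?_)
  ring_nf

end TypicalProperties

section Expansion

variable {V : Type*} [Fintype V]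

lemma mem_extNbhd {G : SimpleGraph V} {U : Finset V} {v : V} :
    v ∈ extNbhd G U ↔ v ∉ U ∧ ∃ u ∈ U, G.Adj u v := by
  rw [extNbhd, Finset.mem_filter_univ]

lemma eIn_mono {G G' : SimpleGraph V} (h : G ≤ G') (W : Finset V) : eIn G W ≤ eIn G' W :=
  Finset.card_le_card (Finset.filter_subset_filter _ (edgeFinset_mono h))

variable [DecidableEq V]

lemma isExpander_induce {G : SimpleGraph V} {V₁ : Finset V} {R : ℝ} {f : ℕ → ℝ}
    (h : ∀ U ⊆ V₁, U.Nonempty → #U ≤ R → f #U * #U ≤ #(extNbhd G U ∩ V₁)) :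
    IsExpander (G.induce (V₁ : Set V)) R f := by
  intro U hU hUR
  let incl : (V₁ : Set V) ↪ V := Function.Embedding.subtype _
  have map_subset : U.map incl ⊆ V₁ := fun v hv => by
    obtain ⟨u, _, rfl⟩ := Finset.mem_map.1 hv
    exact u.2
  have extNbhd_subset : extNbhd G (U.map incl) ∩ V₁
      ⊆ (extNbhd (G.induce (V₁ : Set V)) U).map incl := by
    intro v hv
    obtain ⟨hvN, hvV₁⟩ := Finset.mem_inter.1 hv
    obtain ⟨hvU, _, hu, huv⟩ := mem_extNbhd.1 hvN
    obtain ⟨u, hu', rfl⟩ := Finset.mem_map.1 hu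
    refine Finset.mem_map.2 ⟨⟨v, hvV₁⟩, mem_extNbhd.2 ⟨fun hv => hvU ?_, u, hu', huv⟩, rfl⟩
    exact Finset.mem_map_of_mem incl hv
  have expansion := h (U.map incl) map_subset (hU.map) (by rwa [Finset.card_map])
  rw [Finset.card_map] at expansion
  refine expansion.trans ?_
  exact_mod_cast (Finset.card_le_card extNbhd_subset).trans (Finset.card_map _).le

lemma mul_card_le_two_mul_eIn {G : SimpleGraph V} {U W : Finset V} (hUW : U ⊆ W) {k : ℕ}
    (hk : ∀ u ∈ U, k ≤ #(G.neighborFinset u ∩ W)) : k * #U ≤ 2 * eIn G W := by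
  rw [mul_comm k, mul_comm 2, eIn_eq_card_inter_sym2]
  refine Finset.card_mul_le_card_mul (fun u e => u ∈ e) (fun u hu => (hk u hu).trans ?_)
    fun e _ => card_filter_mem_sym2_le_two U e
  refine Finset.card_le_card_of_injOn (fun w => s(u, w)) (fun w hw => ?_)
    fun _ _ _ _ => Sym2.congr_right.1
  obtain ⟨huw, hwW⟩ := Finset.mem_inter.1 (Finset.mem_coe.1 hw)
  refine Finset.mem_coe.2 (Finset.mem_filter.2 ⟨Finset.mem_inter.2 ⟨?_, ?_⟩, Sym2.mem_mk_left u w⟩)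
  · exact mem_edgeFinset.2 ((mem_neighborFinset _ _ _).1 huw)
  · exact Finset.mk_mem_sym2_iff.2 ⟨hUW hu, hwW⟩

lemma mul_card_le_card_extNbhd_inter {G : SimpleGraph V} {V₁ U : Finset V} (hU : U.Nonempty)
    {k : ℕ} (hk : ∀ u ∈ U, k ≤ #(G.neighborFinset u ∩ V₁)) {m s a : ℝ} (hm : 0 ≤ m)
    (hsparse : ∀ W : Finset V, W.Nonempty → #W ≤ s → eIn G W < m * #W)
    (has : (1 + a) * #U ≤ s) (hmk : 2 * m * (1 + a) ≤ k) :
    a * #U ≤ #(extNbhd G U ∩ V₁) := by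
  by_contra! hcard
  set W := U ∪ extNbhd G U ∩ V₁
  have card_W_le : (#W : ℝ) ≤ (1 + a) * #U := by
    have : (#W : ℝ) ≤ #U + #(extNbhd G U ∩ V₁) := by exact_mod_cast Finset.card_union_le _ _
    linarith
  have neighbors_in_W : ∀ u ∈ U, G.neighborFinset u ∩ V₁ ⊆ G.neighborFinset u ∩ W := by
    intro u hu w hw
    obtain ⟨huw, hwV₁⟩ := Finset.mem_inter.1 hw
    refine Finset.mem_inter.2 ⟨huw, Finset.mem_union.2 (or_iff_not_imp_left.2 fun hwU => ?_)⟩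
    exact Finset.mem_inter.2 ⟨mem_extNbhd.2 ⟨hwU, u, hu, (mem_neighborFinset _ _ _).1 huw⟩, hwV₁⟩
  have few_edges := hsparse W (hU.mono Finset.subset_union_left) (card_W_le.trans has)
  have many_edges : (k * #U : ℝ) ≤ 2 * eIn G W := by
    exact_mod_cast mul_card_le_two_mul_eIn Finset.subset_union_left fun u hu =>
      (hk u hu).trans (Finset.card_le_card (neighbors_in_W u hu))
  have := mul_le_mul_of_nonneg_right hmk (Nat.cast_nonneg #U)
  have := mul_le_mul_of_nonneg_left card_W_le hm
  linarith

lemma card_lt_card_add_card_extNbhd_inter_add {G : SimpleGraph V} {U : Finset V} {z : ℝ}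
    (hadj : ∀ Z, Disjoint U Z → z ≤ #Z → ∃ u ∈ U, ∃ w ∈ Z, G.Adj u w) (V₁ : Finset V) :
    (#V₁ : ℝ) < #U + #(extNbhd G U ∩ V₁) + z := by
  by_contra! hz
  set W := U ∪ extNbhd G U ∩ V₁
  have card_le : (#V₁ : ℝ) ≤ #(V₁ \ W) + (#U + #(extNbhd G U ∩ V₁)) := by
    exact_mod_cast (Finset.card_le_card_sdiff_add_card (s := V₁) (t := W)).trans
      (Nat.add_le_add_left (Finset.card_union_le _ _) _)
  obtain ⟨u, hu, w, hw, huw⟩ := hadj (V₁ \ W)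
    (Finset.disjoint_sdiff.mono_left Finset.subset_union_left) (by linarith)
  obtain ⟨hwV₁, hwW⟩ := Finset.mem_sdiff.1 hw
  rw [Finset.mem_union, not_or] at hwW
  exact hwW.2 (Finset.mem_inter.2 ⟨mem_extNbhd.2 ⟨hwW.1, u, hu, huw⟩, hwV₁⟩)

end Expansion

section Backbones

variable {V : Type*} [Fintype V] [DecidableEq V]

/-- A graph guaranteeing expansion outside an exceptional set `D`: every vertex of `D` has two
neighbours outside `D`, every other vertex has `k`, and any set of at least `s` vertices outside
`D` is joined to every disjoint set of at least `z` vertices. All three conditions survive the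
addition of edges. -/
structure IsBackbone (G : SimpleGraph V) (D : Finset V) (k : ℕ) (s z : ℝ) : Prop where
  two_le : ∀ u ∈ D, 2 ≤ #(G.neighborFinset u ∩ (univ \ D))
  le_card : ∀ u ∉ D, k ≤ #(G.neighborFinset u ∩ (univ \ D))
  exists_adj : ∀ U Z : Finset V, U ⊆ univ \ D → Disjoint U Z → s ≤ #U → z ≤ #Z →
    ∃ u ∈ U, ∃ w ∈ Z, G.Adj u w

lemma IsBackbone.mono {G G' : SimpleGraph V} (h : G ≤ G') {D : Finset V} {k : ℕ} {s z : ℝ}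
    (hG : IsBackbone G D k s z) : IsBackbone G' D k s z where
  two_le u hu := (hG.two_le u hu).trans (Finset.card_le_card (Finset.inter_subset_inter_right
    (Set.toFinset_mono fun _ huw => h huw)))
  le_card u hu := (hG.le_card u hu).trans (Finset.card_le_card (Finset.inter_subset_inter_right
    (Set.toFinset_mono fun _ huw => h huw)))
  exists_adj U Z hUD hUZ hU hZ := by
    obtain ⟨u, hu, w, hw, huw⟩ := hG.exists_adj U Z hUD hUZ hU hZ
    exact ⟨u, hu, w, hw, h huw⟩

lemma exists_le_isBackbone_of_forall_exists_mem {G : SimpleGraph V} {D : Finset V} {k : ℕ}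
    {s z : ℝ} (hk : 2 ≤ k) (htwo : ∀ u ∈ D, 2 ≤ #(G.neighborFinset u ∩ (univ \ D)))
    (hdeg : ∀ u ∉ D, k ≤ #(G.neighborFinset u ∩ (univ \ D))) {T : Finset (Sym2 V)}
    (hT : ↑T ⊆ G.edgeSet)
    (hcut : ∀ U Z : Finset V, U ⊆ univ \ D → Disjoint U Z → s ≤ #U → z ≤ #Z →
      ∃ u ∈ U, ∃ w ∈ Z, s(u, w) ∈ T) :
    ∃ Γ ≤ G, IsBackbone Γ D k s z ∧ edgeCount Γ ≤ Fintype.card V * k + #T := by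
  have choice : ∀ u, ∃ N ⊆ G.neighborFinset u ∩ (univ \ D), #N = if u ∈ D then 2 else k := by
    intro u
    refine Finset.exists_subset_card_eq ?_
    split_ifs with hu
    exacts [htwo u hu, hdeg u hu]
  choose N hN card_N using choice
  let B : Finset (Sym2 V) := univ.biUnion fun u => (N u).image fun w => s(u, w)
  have mem_B : ∀ u, ∀ w ∈ N u, s(u, w) ∈ B := fun u w hw =>
    Finset.mem_biUnion.2 ⟨u, Finset.mem_univ u, Finset.mem_image_of_mem _ hw⟩
  have edges_subset : B ∪ T ⊆ G.edgeFinset := by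
    refine Finset.union_subset (Finset.biUnion_subset.2 fun u _ => ?_)
      (Set.subset_toFinset.2 hT)
    refine Finset.image_subset_iff.2 fun w hw => mem_edgeFinset.2 ?_
    exact (mem_neighborFinset _ _ _).1 (Finset.mem_inter.1 (hN u hw)).1
  have card_B : #B ≤ Fintype.card V * k := by
    refine Finset.card_biUnion_le_card_mul _ _ _ fun u _ => Finset.card_image_le.trans ?_
    rw [card_N]
    split_ifs
    exacts [hk, le_rfl]
  obtain ⟨Γ, edgeFinset_Γ⟩ : ∃ Γ : SimpleGraph V, Γ.edgeFinset = B ∪ T :=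
    ⟨fromEdgeSet (B ∪ T : Finset (Sym2 V)),
      edgeFinset_fromEdgeSet_of_subset (edges_subset.trans (edgeFinset_mono le_top))⟩
  have adj_of_mem : ∀ {u w}, s(u, w) ∈ B ∪ T → Γ.Adj u w := fun h =>
    (mem_edgeSet _).1 (mem_edgeFinset.1 (edgeFinset_Γ ▸ h))
  have card_N_le : ∀ u, #(N u) ≤ #(Γ.neighborFinset u ∩ (univ \ D)) := fun u =>
    Finset.card_le_card fun w hw => Finset.mem_inter.2
      ⟨(mem_neighborFinset _ _ _).2 (adj_of_mem (Finset.mem_union_left _ (mem_B u w hw))),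
        (Finset.mem_inter.1 (hN u hw)).2⟩
  refine ⟨Γ, edgeFinset_subset_edgeFinset.1 (edgeFinset_Γ.trans_subset edges_subset),
    ⟨fun u hu => ?_, fun u hu => ?_, fun U Z hUD hUZ hU hZ => ?_⟩, ?_⟩
  · simpa only [card_N, if_pos hu] using card_N_le u
  · simpa only [card_N, if_neg hu] using card_N_le u
  · obtain ⟨u, hu, w, hw, huw⟩ := hcut U Z hUD hUZ hU hZ
    exact ⟨u, hu, w, hw, adj_of_mem (Finset.mem_union_right _ huw)⟩
  · rw [edgeCount, edgeFinset_Γ]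
    exact (Finset.card_union_le _ _).trans (Nat.add_le_add_right card_B _)

end Backbones

section HittingSets

variable {α ι : Type*} {E : Finset α} {F : Finset ι} {f : ι → Finset α} {σ : ℝ}

lemma sum_card_filter_mem_eq_sum_card (hf : ∀ i ∈ F, f i ⊆ E) :
    ∑ e ∈ E, #{i ∈ F | e ∈ f i} = ∑ i ∈ F, #(f i) := by
  refine (Finset.sum_card_bipartiteAbove_eq_sum_card_bipartiteBelow fun e i => e ∈ f i).trans
    (Finset.sum_congr rfl fun i hi => congrArg Finset.card ?_)
  rw [Finset.bipartiteBelow, Finset.filter_mem_eq_inter, Finset.inter_eq_right.2 (hf i hi)]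

/- Greedy choice: some element of `E` lies in at least a proportion `σ` of the sets not yet hit. -/
lemma exists_subset_card_filter_disjoint_le (hE : E.Nonempty) (hσ : σ ≤ 1)
    (hf : ∀ i ∈ F, f i ⊆ E) (hcard : ∀ i ∈ F, σ * #E ≤ #(f i)) (r : ℕ) :
    ∃ T ⊆ E, #T ≤ r ∧ #{i ∈ F | Disjoint (f i) T} ≤ #F * (1 - σ) ^ r := by
  induction r with
  | zero => exact ⟨∅, by simp⟩
  | succ r ih =>
    obtain ⟨T, hTE, card_T, card_missed⟩ := ih
    set F' := F.filter fun i => Disjoint (f i) T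
    have average : ∑ _e ∈ E, σ * (#F' : ℝ) ≤ ∑ e ∈ E, (#{i ∈ F' | e ∈ f i} : ℝ) := calc
      ∑ _e ∈ E, σ * (#F' : ℝ) = ∑ _i ∈ F', σ * (#E : ℝ) := by
        simp only [Finset.sum_const, nsmul_eq_mul]
        ring
      _ ≤ ∑ i ∈ F', (#(f i) : ℝ) :=
        Finset.sum_le_sum fun i hi => hcard i (Finset.mem_filter.1 hi).1
      _ = ∑ e ∈ E, (#{i ∈ F' | e ∈ f i} : ℝ) := by
        exact_mod_cast (sum_card_filter_mem_eq_sum_card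
          fun i hi => hf i (Finset.mem_filter.1 hi).1).symm
    obtain ⟨e, heE, he⟩ := Finset.exists_le_of_sum_le hE average
    refine ⟨insert e T, Finset.insert_subset heE hTE,
      (Finset.card_insert_le _ _).trans (Nat.succ_le_succ card_T), ?_⟩
    have missed_eq : {i ∈ F | Disjoint (f i) (insert e T)} = {i ∈ F' | e ∉ f i} := by
      ext i
      simp only [F', Finset.mem_filter, Finset.disjoint_insert_right]
      tauto
    have split : (#{i ∈ F' | e ∈ f i} + #{i ∈ F' | e ∉ f i} : ℝ) = #F' := by
      exact_mod_cast Finset.card_filter_add_card_filter_not fun i => e ∈ f i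
    calc (#{i ∈ F | Disjoint (f i) (insert e T)} : ℝ) ≤ #F' * (1 - σ) := by
          rw [missed_eq]
          linarith
      _ ≤ #F * (1 - σ) ^ r * (1 - σ) := mul_le_mul_of_nonneg_right card_missed (sub_nonneg.2 hσ)
      _ = #F * (1 - σ) ^ (r + 1) := by ring

lemma exists_subset_forall_not_disjoint (hσ : σ ≤ 1) (hf : ∀ i ∈ F, f i ⊆ E)
    (hne : ∀ i ∈ F, (f i).Nonempty) (hcard : ∀ i ∈ F, σ * #E ≤ #(f i)) {r : ℕ}
    (hr : #F * (1 - σ) ^ r < 1) :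
    ∃ T ⊆ E, #T ≤ r ∧ ∀ i ∈ F, ¬ Disjoint (f i) T := by
  rcases F.eq_empty_or_nonempty with rfl | ⟨i, hi⟩
  · exact ⟨∅, by simp⟩
  obtain ⟨T, hTE, card_T, card_missed⟩ :=
    exists_subset_card_filter_disjoint_le ((hne i hi).mono (hf i hi)) hσ hf hcard r
  have none_missed : #{i ∈ F | Disjoint (f i) T} < 1 := by
    exact_mod_cast card_missed.trans_lt hr
  rw [Nat.lt_one_iff, Finset.card_eq_zero, Finset.filter_eq_empty_iff] at none_missed
  exact ⟨T, hTE, card_T, fun _ => @none_missed _⟩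

end HittingSets

section CutTransversals

lemma four_pow_mul_one_sub_pow_ceil_lt_one {n : ℕ} (hn : 0 < n) {σ : ℝ} (hσ : 0 < σ) (hσ1 : σ ≤ 1) :
    (4 : ℝ) ^ n * (1 - σ) ^ ⌈2 * n / σ⌉₊ < 1 := by
  have hn' : (0 : ℝ) < n := Nat.cast_pos.2 hn
  have pow_le : (1 - σ) ^ ⌈2 * n / σ⌉₊ ≤ Real.exp (-(2 * n)) := calc
    (1 - σ) ^ ⌈2 * n / σ⌉₊ ≤ Real.exp (-σ) ^ ⌈2 * n / σ⌉₊ :=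
      pow_le_pow_left₀ (sub_nonneg.2 hσ1) (Real.one_sub_le_exp_neg σ) _
    _ = Real.exp (⌈2 * n / σ⌉₊ * -σ) := (Real.exp_nat_mul _ _).symm
    _ ≤ Real.exp (-(2 * n)) := by
      rw [Real.exp_le_exp, mul_neg, neg_le_neg_iff, ← div_le_iff₀ hσ]
      exact Nat.le_ceil _
  have four_eq : (4 : ℝ) ^ n = Real.exp (n * (2 * Real.log 2)) := by
    rw [Real.exp_nat_mul, mul_comm 2, Real.exp_mul, Real.exp_log two_pos]
    norm_num
  calc (4 : ℝ) ^ n * (1 - σ) ^ ⌈2 * n / σ⌉₊ ≤ 4 ^ n * Real.exp (-(2 * n)) := by gcongr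
    _ = Real.exp (n * (2 * Real.log 2) - 2 * n) := by rw [four_eq, ← Real.exp_add, sub_eq_add_neg]
    _ < 1 := Real.exp_lt_one_iff.2 (by nlinarith [Real.log_two_lt_d9])

lemma exists_subset_edgeFinset_meeting_cuts {V : Type*} [Fintype V] [Nonempty V]
    {G : SimpleGraph V} {P : Finset V → Finset V → Prop} {σ : ℝ} (hσ : 0 < σ) (hσ1 : σ ≤ 1)
    (hdisj : ∀ U Z, P U Z → Disjoint U Z) (hpos : ∀ U Z, P U Z → 0 < eBetween G U Z)
    (hcard : ∀ U Z, P U Z → σ * edgeCount G ≤ eBetween G U Z) :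
    ∃ T : Finset (Sym2 V), ↑T ⊆ G.edgeSet ∧ #T ≤ ⌈2 * Fintype.card V / σ⌉₊ ∧
      ∀ U Z, P U Z → ∃ u ∈ U, ∃ w ∈ Z, s(u, w) ∈ T := by
  let F : Finset (Finset V × Finset V) := {q | P q.1 q.2}
  have hF : ∀ q ∈ F, P q.1 q.2 := fun q => (Finset.mem_filter_univ q).1
  have card_cut : ∀ q ∈ F, #(G.edgeFinset ∩ crossPairs q.1 q.2) = eBetween G q.1 q.2 :=
    fun q hq => card_edgeFinset_inter_crossPairs G (hdisj _ _ (hF q hq))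
  have few_cuts : #F ≤ 4 ^ Fintype.card V := calc
    #F ≤ 2 ^ Fintype.card V * 2 ^ Fintype.card V := (Finset.card_le_univ F).trans_eq <| by
      rw [Fintype.card_prod, Fintype.card_finset]
    _ = 4 ^ Fintype.card V := (mul_pow 2 2 _).symm
  have card_missed_lt : #F * (1 - σ) ^ ⌈2 * Fintype.card V / σ⌉₊ < 1 :=
    (mul_le_mul_of_nonneg_right (by exact_mod_cast few_cuts)
      (pow_nonneg (sub_nonneg.2 hσ1) _)).trans_lt
        (four_pow_mul_one_sub_pow_ceil_lt_one Fintype.card_pos hσ hσ1)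
  obtain ⟨T, hT, card_T, meets⟩ := exists_subset_forall_not_disjoint hσ1
    (f := fun q => G.edgeFinset ∩ crossPairs q.1 q.2) (fun _ _ => Finset.inter_subset_left)
    (fun q hq => Finset.card_pos.1 ((card_cut q hq).symm ▸ hpos _ _ (hF q hq)))
    (fun q hq => (card_cut q hq).symm ▸ hcard _ _ (hF q hq)) card_missed_lt
  refine ⟨T, Set.subset_toFinset.1 hT, card_T, fun U Z hUZ => ?_⟩
  obtain ⟨e, he, heT⟩ := Finset.not_disjoint_iff.1
    (meets (U, Z) ((Finset.mem_filter_univ _).2 hUZ))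
  obtain ⟨⟨u, w⟩, huw, rfl⟩ := Finset.mem_image.1 (Finset.mem_inter.1 he).2
  obtain ⟨hu, hw⟩ := Finset.mem_product.1 huw
  exact ⟨u, hu, w, hw, heT⟩

end CutTransversals

section DeletedSubgraphs

variable {V : Type*} [Fintype V]

lemma edgeCount_mono {G G' : SimpleGraph V} (h : G ≤ G') : edgeCount G ≤ edgeCount G' :=
  Finset.card_le_card (edgeFinset_mono h)

lemma eBetween_le_eBetween_sdiff_add (G H : SimpleGraph V) (U Z : Finset V) :
    eBetween G U Z ≤ eBetween (G \ H) U Z + eBetween H U Z := by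
  refine (Finset.card_le_card fun q hq => ?_).trans (Finset.card_union_le _ _)
  simp only [Finset.mem_union, Finset.mem_filter, sdiff_adj] at hq ⊢
  tauto

lemma eBetween_le_sum_degree (G : SimpleGraph V) (U Z : Finset V) :
    eBetween G U Z ≤ ∑ u ∈ U, G.degree u := by
  rw [eBetween, Finset.card_filter, Finset.sum_product]
  refine Finset.sum_le_sum fun u _ => ?_
  rw [← Finset.card_filter, ← card_neighborFinset_eq_degree]
  exact Finset.card_le_card fun z hz => (mem_neighborFinset _ _ _).2 (Finset.mem_filter.1 hz).2

lemma degree_le_card_neighborFinset_sdiff_inter_add [DecidableEq V] (G H : SimpleGraph V)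
    (D : Finset V) (v : V) :
    G.degree v ≤ #((G \ H).neighborFinset v ∩ (univ \ D)) + #(G.neighborFinset v ∩ D)
      + H.degree v := by
  simp only [← card_neighborFinset_eq_degree]
  refine (Finset.card_le_card fun w hw => ?_).trans <|
    (Finset.card_union_le _ (H.neighborFinset v)).trans
      (Nat.add_le_add_right (Finset.card_union_le _ _) _)
  simp only [Finset.mem_union, Finset.mem_inter, Finset.mem_sdiff, Finset.mem_univ,
    mem_neighborFinset, sdiff_adj] at hw ⊢
  tauto

end DeletedSubgraphs

section TypicalGraphs

/-- The properties of a sample of `G(n, p)` on which the deterministic part of the argument rests: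
few low-degree vertices, no short trail between them, no dense small set, many edges across every
large cut, and degree sums close to their mean. -/
structure IsTypical {n : ℕ} (ε β p : ℝ) (G : SimpleGraph (Fin n)) : Prop where
  card_lowDegSet_le : (#(lowDegSet n (n * p / 100) G) : ℝ) ≤ (n : ℝ) ^ (0.09 : ℝ)
  lt_length_of_isTrail : ∀ u ∈ lowDegSet n (n * p / 100) G, ∀ v ∈ lowDegSet n (n * p / 100) G,
    ∀ q : G.Walk u v, q.IsTrail → 0 < q.length →
      2 * Real.log n / (3 * Real.log (Real.log n)) < q.length
  eIn_lt_rpow_mul_card : ∀ W : Finset (Fin n), W.Nonempty → #W ≤ (n : ℝ) ^ (0.11 : ℝ) →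
    eIn G W < (n * p) ^ (0.15 : ℝ) * #W
  eIn_lt_mul_card : ∀ W : Finset (Fin n), W.Nonempty → #W ≤ 12 * (β * n) →
    eIn G W < 50 * β * (n * p) * #W
  lt_eBetween : ∀ U Z : Finset (Fin n), Disjoint U Z → β * n / 2 ≤ #U →
    (1 / 3 - 28 * β) * n ≤ #Z → (1 - ε / 10) * (#U * #Z * p) < eBetween G U Z
  sum_degree_lt : ∀ U : Finset (Fin n), β * n / 2 ≤ #U →
    ∑ u ∈ U, (G.degree u : ℝ) < (1 + ε / 10) * (#U * (n * p))

/-- The constants `ε` and `β` are small, and `n` and the mean degree `n * p` are large enough in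
terms of them, for the deterministic part of the argument. -/
structure IsAdmissible (ε β : ℝ) (n : ℕ) (p : ℝ) : Prop where
  eps_pos : 0 < ε
  eps_le : ε ≤ 1 / 3
  beta_pos : 0 < β
  beta_le : β ≤ 1 / 10 ^ 6
  beta_le_eps : β ≤ ε / 100
  four_le_beta_mul : 4 ≤ β * n
  rpow_le_beta_mul : (n : ℝ) ^ (0.09 : ℝ) ≤ β * n
  two_le_log_div : 2 ≤ 2 * Real.log n / (3 * Real.log (Real.log n))
  one_add_log_rpow_mul_le : (1 + Real.log n ^ (0.8 : ℝ)) * (n : ℝ) ^ (0.1 : ℝ) ≤ n ^ (0.11 : ℝ)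
  thousand_le_mean : 1000 ≤ n * p
  one_le_mean : 1 ≤ 100 * β * (n * p)
  div_le_mean : 8 / (ε * β) + 1 ≤ 1000 * β * (n * p)
  rpow_mean_mul_le : (n * p) ^ (0.15 : ℝ) * (1 + Real.log n ^ (0.8 : ℝ)) ≤ 600 * β * (n * p)

variable {n : ℕ} {ε β p : ℝ}

lemma IsAdmissible.natCast_pos (h : IsAdmissible ε β n p) : (0 : ℝ) < n :=
  (pos_iff_pos_of_mul_pos ((by norm_num : (0 : ℝ) < 4).trans_le h.four_le_beta_mul)).1 h.beta_pos

lemma IsAdmissible.prob_pos (h : IsAdmissible ε β n p) : 0 < p :=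
  (pos_iff_pos_of_mul_pos ((by norm_num : (0 : ℝ) < 1000).trans_le h.thousand_le_mean)).1
    h.natCast_pos

lemma IsAdmissible.ceil_le (h : IsAdmissible ε β n p) :
    (⌈1200 * β * (n * p)⌉₊ : ℝ) ≤ 1300 * β * (n * p) := by
  have : 0 ≤ 1200 * β * (n * p) := by
    have := h.beta_pos; have := h.prob_pos; positivity
  linarith [Nat.ceil_lt_add_one this, h.one_le_mean]

lemma IsAdmissible.two_le_ceil (h : IsAdmissible ε β n p) : 2 ≤ ⌈1200 * β * (n * p)⌉₊ :=
  Nat.lt_ceil.2 (by push_cast; linarith [h.one_le_mean])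

lemma IsAdmissible.ceil_add_one_le (h : IsAdmissible ε β n p) :
    (⌈1200 * β * (n * p)⌉₊ + 1 : ℝ) ≤ n * p / 150 := by
  have : β * (n * p) ≤ 1 / 10 ^ 6 * (n * p) :=
    mul_le_mul_of_nonneg_right h.beta_le (by linarith [h.thousand_le_mean])
  linarith [h.ceil_le, h.thousand_le_mean]

lemma IsAdmissible.mul_ceil_add_ceil_le (h : IsAdmissible ε β n p) :
    (n * ⌈1200 * β * (n * p)⌉₊ + ⌈2 * n / (ε * β / 4)⌉₊ : ℝ)
      ≤ 2 * 10 ^ 6 * β * ((n : ℝ) ^ 2 * p) := by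
  have hn : (1 : ℝ) ≤ n := by exact_mod_cast Nat.cast_pos.1 h.natCast_pos
  have := h.eps_pos
  have := h.beta_pos
  have := h.prob_pos
  calc (n * ⌈1200 * β * (n * p)⌉₊ + ⌈2 * n / (ε * β / 4)⌉₊ : ℝ)
      ≤ n * (1300 * β * (n * p)) + (2 * n / (ε * β / 4) + 1) := by
        gcongr
        exacts [h.ceil_le, (Nat.ceil_lt_add_one (by positivity)).le]
    _ ≤ n * (1300 * β * (n * p)) + n * (8 / (ε * β) + 1) := by
        rw [mul_add (n : ℝ) (8 / (ε * β)), mul_one]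
        gcongr
        apply le_of_eq
        field_simp
        norm_num
    _ ≤ n * (1300 * β * (n * p)) + n * (1000 * β * (n * p)) := by
        gcongr
        exact h.div_le_mean
    _ = 2300 * (β * (n ^ 2 * p)) := by ring
    _ ≤ 2 * 10 ^ 6 * (β * (n ^ 2 * p)) := by gcongr; norm_num
    _ = 2 * 10 ^ 6 * β * ((n : ℝ) ^ 2 * p) := by ring

variable {G H : SimpleGraph (Fin n)}

/- Deleting `H` costs less than a third of the degree sum of `U`, while the cut contains about a
third of it. -/
lemma IsTypical.mul_le_eBetween_sdiff (hG : IsTypical ε β p G) (h : IsAdmissible ε β n p)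
    {U Z : Finset (Fin n)} (hH : ∀ u ∈ U, (H.degree u : ℝ) ≤ (1 / 3 - ε) * G.degree u)
    (hUZ : Disjoint U Z) (hU : β * n / 2 ≤ #U) (hZ : (1 / 3 - 28 * β) * n ≤ #Z) :
    ε * β / 4 * (n * (n * p)) ≤ eBetween (G \ H) U Z := by
  have hε := h.eps_pos
  have hε3 := h.eps_le
  have hp := h.prob_pos
  have split : (eBetween G U Z : ℝ) ≤ eBetween (G \ H) U Z + ∑ u ∈ U, (H.degree u : ℝ) := by
    exact_mod_cast (eBetween_le_eBetween_sdiff_add G H U Z).trans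
      (Nat.add_le_add_left (eBetween_le_sum_degree H U Z) _)
  have deleted : ∑ u ∈ U, (H.degree u : ℝ) ≤ (1 / 3 - ε) * ((1 + ε / 10) * (#U * (n * p))) := calc
    ∑ u ∈ U, (H.degree u : ℝ) ≤ (1 / 3 - ε) * ∑ u ∈ U, (G.degree u : ℝ) := by
      rw [Finset.mul_sum]
      exact Finset.sum_le_sum hH
    _ ≤ (1 / 3 - ε) * ((1 + ε / 10) * (#U * (n * p))) :=
      mul_le_mul_of_nonneg_left (hG.sum_degree_lt U hU).le (by linarith)
  have cut : (1 - ε / 10) * (#U * ((1 / 3 - 28 * β) * n) * p) ≤ eBetween G U Z := by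
    refine le_trans ?_ (hG.lt_eBetween U Z hUZ hU hZ).le
    gcongr
    linarith
  have gain : ε / 2 ≤ (1 - ε / 10) * (1 / 3 - 28 * β) - (1 / 3 - ε) * (1 + ε / 10) := by
    nlinarith [h.beta_le_eps, mul_pos hε h.beta_pos, mul_pos hε hε]
  calc ε * β / 4 * (n * (n * p)) = ε / 2 * (β * n / 2 * (n * p)) := by ring
    _ ≤ ε / 2 * (#U * (n * p)) := by gcongr
    _ ≤ ((1 - ε / 10) * (1 / 3 - 28 * β) - (1 / 3 - ε) * (1 + ε / 10)) * (#U * (n * p)) := by gcongr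
    _ = (1 - ε / 10) * (#U * ((1 / 3 - 28 * β) * n) * p)
        - (1 / 3 - ε) * ((1 + ε / 10) * (#U * (n * p))) := by ring
    _ ≤ eBetween (G \ H) U Z := by linarith

lemma IsTypical.edgeCount_le (hG : IsTypical ε β p G) (h : IsAdmissible ε β n p) :
    (edgeCount G : ℝ) ≤ n * (n * p) := by
  have total := hG.sum_degree_lt univ <| by
    rw [Finset.card_fin]
    nlinarith [h.beta_le, h.natCast_pos]
  have handshake : ∑ u, (G.degree u : ℝ) = 2 * edgeCount G := by
    exact_mod_cast sum_degrees_eq_twice_card_edges G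
  have mean_nonneg : 0 ≤ n * (n * p) := by
    have := h.prob_pos
    positivity
  rw [handshake, Finset.card_fin] at total
  nlinarith [h.eps_le]

lemma IsTypical.exists_edges_meeting_cuts (hG : IsTypical ε β p G) (h : IsAdmissible ε β n p)
    {D : Finset (Fin n)} (hH : ∀ u ∉ D, (H.degree u : ℝ) ≤ (1 / 3 - ε) * G.degree u) :
    ∃ T : Finset (Sym2 (Fin n)), ↑T ⊆ (G \ H).edgeSet ∧ #T ≤ ⌈2 * n / (ε * β / 4)⌉₊ ∧
      ∀ U Z : Finset (Fin n), U ⊆ univ \ D → Disjoint U Z → β * n / 2 ≤ #U →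
        (1 / 3 - 28 * β) * n ≤ #Z → ∃ u ∈ U, ∃ w ∈ Z, s(u, w) ∈ T := by
  have hσ : 0 < ε * β / 4 := by
    have := h.eps_pos
    have := h.beta_pos
    positivity
  have hσ1 : ε * β / 4 ≤ 1 := by nlinarith [h.eps_pos, h.eps_le, h.beta_pos, h.beta_le]
  have : Nonempty (Fin n) := Fin.pos_iff_nonempty.1 (Nat.cast_pos.1 h.natCast_pos)
  have card_cut : ∀ U Z : Finset (Fin n), (U ⊆ univ \ D ∧ Disjoint U Z ∧ β * n / 2 ≤ #U ∧
      (1 / 3 - 28 * β) * n ≤ #Z) → ε * β / 4 * (n * (n * p)) ≤ eBetween (G \ H) U Z :=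
    fun U Z ⟨hD, hdisj, hU, hZ⟩ => hG.mul_le_eBetween_sdiff h
      (fun u hu => hH u (Finset.mem_sdiff.1 (hD hu)).2) hdisj hU hZ
  have card_edges : (edgeCount (G \ H) : ℝ) ≤ n * (n * p) :=
    le_trans (by exact_mod_cast edgeCount_mono sdiff_le) (hG.edgeCount_le h)
  have mean_pos : 0 < n * (n * p) := by
    have := h.natCast_pos
    have := h.prob_pos
    positivity
  obtain ⟨T, hT, card_T, meets⟩ := exists_subset_edgeFinset_meeting_cuts hσ hσ1
    (fun _ _ hUZ => hUZ.2.1)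
    (fun U Z hUZ => Nat.cast_pos.1 ((mul_pos hσ mean_pos).trans_le (card_cut U Z hUZ)))
    (fun U Z hUZ => (mul_le_mul_of_nonneg_left card_edges hσ.le).trans (card_cut U Z hUZ))
  rw [Fintype.card_fin] at card_T
  exact ⟨T, hT, card_T, fun U Z hD hdisj hU hZ => meets U Z ⟨hD, hdisj, hU, hZ⟩⟩

lemma IsTypical.two_lt_length (hG : IsTypical ε β p G) (h : IsAdmissible ε β n p)
    {u v : Fin n} (hu : u ∈ lowDegSet n (n * p / 100) G) (hv : v ∈ lowDegSet n (n * p / 100) G)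
    {q : G.Walk u v} (hq : q.IsTrail) (hpos : 0 < q.length) : 2 < q.length := by
  exact_mod_cast h.two_le_log_div.trans_lt (hG.lt_length_of_isTrail u hu v hv q hq hpos)

lemma IsTypical.disjoint_neighborFinset_lowDegSet (hG : IsTypical ε β p G)
    (h : IsAdmissible ε β n p) {v : Fin n} (hv : v ∈ lowDegSet n (n * p / 100) G) :
    Disjoint (G.neighborFinset v) (lowDegSet n (n * p / 100) G) := by
  refine Finset.disjoint_left.2 fun w hvw hw => ?_
  have hadj : G.Adj v w := (mem_neighborFinset _ _ _).1 hvw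
  have := hG.two_lt_length h hv hw (Walk.IsPath.of_adj hadj).isTrail (by simp)
  simp at this

lemma IsTypical.card_neighborFinset_inter_lowDegSet_le_one (hG : IsTypical ε β p G)
    (h : IsAdmissible ε β n p) (v : Fin n) :
    #(G.neighborFinset v ∩ lowDegSet n (n * p / 100) G) ≤ 1 := by
  refine Finset.card_le_one.2 fun a ha b hb => by_contra fun hab => ?_
  obtain ⟨hva, ha⟩ := Finset.mem_inter.1 ha
  obtain ⟨hvb, hb⟩ := Finset.mem_inter.1 hb
  rw [mem_neighborFinset] at hva hvb
  have isTrail : (Walk.cons hva.symm hvb.toWalk).IsTrail := by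
    simp [Walk.isTrail_cons, hab, hva.ne']
  have := hG.two_lt_length h ha hb isTrail (by simp)
  simp at this

lemma IsTypical.two_le_card_neighborFinset_sdiff_inter (hG : IsTypical ε β p G)
    (h : IsAdmissible ε β n p) {v : Fin n} (hv : v ∈ lowDegSet n (n * p / 100) G)
    (hH : (H.degree v : ℝ) ≤ G.degree v - 2) :
    2 ≤ #((G \ H).neighborFinset v ∩ (univ \ lowDegSet n (n * p / 100) G)) := by
  have degree_ge : H.degree v + 2 ≤ G.degree v := by
    exact_mod_cast (le_sub_iff_add_le.1 hH : (H.degree v + 2 : ℝ) ≤ G.degree v)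
  have no_low := Finset.disjoint_iff_inter_eq_empty.1 (hG.disjoint_neighborFinset_lowDegSet h hv)
  have := degree_le_card_neighborFinset_sdiff_inter_add G H (lowDegSet n (n * p / 100) G) v
  rw [no_low, Finset.card_empty] at this
  omega

lemma IsTypical.ceil_le_card_neighborFinset_sdiff_inter (hG : IsTypical ε β p G)
    (h : IsAdmissible ε β n p) {v : Fin n} (hv : n * p / 100 ≤ G.degree v)
    (hH : (H.degree v : ℝ) ≤ (1 / 3 - ε) * G.degree v) :
    ⌈1200 * β * (n * p)⌉₊
      ≤ #((G \ H).neighborFinset v ∩ (univ \ lowDegSet n (n * p / 100) G)) := by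
  have few_low : (#(G.neighborFinset v ∩ lowDegSet n (n * p / 100) G) : ℝ) ≤ 1 := by
    exact_mod_cast hG.card_neighborFinset_inter_lowDegSet_le_one h v
  have split : (G.degree v : ℝ)
      ≤ #((G \ H).neighborFinset v ∩ (univ \ lowDegSet n (n * p / 100) G))
        + #(G.neighborFinset v ∩ lowDegSet n (n * p / 100) G) + H.degree v := by
    exact_mod_cast degree_le_card_neighborFinset_sdiff_inter_add G H _ v
  have : (⌈1200 * β * (n * p)⌉₊ : ℝ)
      ≤ #((G \ H).neighborFinset v ∩ (univ \ lowDegSet n (n * p / 100) G)) := by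
    nlinarith [h.ceil_add_one_le, h.eps_pos]
  exact_mod_cast this

variable {Γ : SimpleGraph (Fin n)} {U V₁ D : Finset (Fin n)}

lemma IsTypical.log_rpow_mul_card_le_card_extNbhd_inter (hG : IsTypical ε β p G)
    (h : IsAdmissible ε β n p) (hΓ : Γ ≤ G) (hU : U.Nonempty)
    (hk : ∀ u ∈ U, ⌈1200 * β * (n * p)⌉₊ ≤ #(Γ.neighborFinset u ∩ V₁))
    (hcard : #U ≤ (n : ℝ) ^ (0.1 : ℝ)) :
    Real.log n ^ (0.8 : ℝ) * #U ≤ #(extNbhd Γ U ∩ V₁) := by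
  have log_nonneg : 0 ≤ 1 + Real.log n ^ (0.8 : ℝ) := by positivity
  refine mul_card_le_card_extNbhd_inter hU hk
    (Real.rpow_nonneg (by linarith [h.thousand_le_mean]) 0.15)
    (fun W hW hWs => lt_of_le_of_lt ?_ (hG.eIn_lt_rpow_mul_card W hW hWs))
    ((mul_le_mul_of_nonneg_left hcard log_nonneg).trans h.one_add_log_rpow_mul_le) ?_
  · exact_mod_cast eIn_mono hΓ W
  · linarith [h.rpow_mean_mul_le, Nat.le_ceil (1200 * β * (n * p))]

lemma IsTypical.eleven_mul_card_le_card_extNbhd_inter (hG : IsTypical ε β p G)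
    (h : IsAdmissible ε β n p) (hΓ : Γ ≤ G) (hU : U.Nonempty)
    (hk : ∀ u ∈ U, ⌈1200 * β * (n * p)⌉₊ ≤ #(Γ.neighborFinset u ∩ V₁)) (hcard : #U ≤ β * n) :
    11 * #U ≤ (#(extNbhd Γ U ∩ V₁) : ℝ) := by
  refine mul_card_le_card_extNbhd_inter hU hk (m := 50 * β * (n * p))
    (by linarith [h.one_le_mean])
    (fun W hW hWs => lt_of_le_of_lt ?_ (hG.eIn_lt_mul_card W hW hWs)) (by linarith) ?_
  · exact_mod_cast eIn_mono hΓ W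
  · linarith [Nat.le_ceil (1200 * β * (n * p))]

lemma IsBackbone.mul_card_le_card_extNbhd_inter {k : ℕ}
    (hΓ : IsBackbone Γ D k (β * n / 2) ((1 / 3 - 28 * β) * n)) (hβ : 0 < β) (hβ1 : β ≤ 1 / 100)
    (hn : 4 ≤ β * n) (hD : (1 - β) * n ≤ #(univ \ D)) (hU : U ⊆ univ \ D)
    (hcard : #U = ⌊β * #(univ \ D)⌋₊) :
    2 * (1 + 39 * β) / (3 * β) * #U ≤ #(extNbhd Γ U ∩ (univ \ D)) := by
  have card_le : (#U : ℝ) ≤ β * #(univ \ D) := hcard ▸ Nat.floor_le (by positivity)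
  have card_ge : β * n / 2 ≤ #U := by
    have : β * #(univ \ D) < #U + 1 := hcard ▸ Nat.lt_floor_add_one (β * #(univ \ D))
    nlinarith [mul_le_mul_of_nonneg_left hD hβ.le]
  have expansion := card_lt_card_add_card_extNbhd_inter_add
    (fun Z hUZ hZ => hΓ.exists_adj U Z hU hUZ card_ge hZ) (univ \ D)
  have missed : (1 / 3 - 28 * β) * n ≤ (1 / 3 - 27 * β) * #(univ \ D) := calc
    (1 / 3 - 28 * β) * n ≤ (1 / 3 - 27 * β) * ((1 - β) * n) := by
      rw [← mul_assoc]
      exact mul_le_mul_of_nonneg_right (by nlinarith) (Nat.cast_nonneg n)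
    _ ≤ (1 / 3 - 27 * β) * #(univ \ D) := mul_le_mul_of_nonneg_left hD (by linarith)
  calc 2 * (1 + 39 * β) / (3 * β) * #U
      ≤ 2 * (1 + 39 * β) / (3 * β) * (β * #(univ \ D)) := by gcongr
    _ = 2 * (1 + 39 * β) / 3 * #(univ \ D) := by field_simp
    _ ≤ #(extNbhd Γ U ∩ (univ \ D)) := by linarith

lemma IsTypical.isExpander_induce (hG : IsTypical ε β p G) (h : IsAdmissible ε β n p)
    (hΓG : Γ ≤ G) (hD : (1 - β) * n ≤ #(univ \ D))
    (hΓ : IsBackbone Γ D ⌈1200 * β * (n * p)⌉₊ (β * n / 2) ((1 / 3 - 28 * β) * n)) :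
    IsExpander (Γ.induce ((univ \ D : Finset (Fin n)) : Set (Fin n))) (β * #(univ \ D))
      (fBeta β #(univ \ D)) := by
  refine _root_.isExpander_induce fun U hUD hU hcard => ?_
  have card_sdiff_le : (#(univ \ D) : ℝ) ≤ n := by
    exact_mod_cast (Finset.card_le_univ _).trans_eq (Fintype.card_fin n)
  have le_degree : ∀ u ∈ U, ⌈1200 * β * (n * p)⌉₊ ≤ #(Γ.neighborFinset u ∩ (univ \ D)) :=
    fun u hu => hΓ.le_card u (Finset.mem_sdiff.1 (hUD hu)).2
  rw [fBeta]
  split_ifs with hfloor hsmall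
  · exact hΓ.mul_card_le_card_extNbhd_inter h.beta_pos (h.beta_le.trans (by norm_num))
      h.four_le_beta_mul hD hUD hfloor
  · have nonempty := hU.mono hUD
    refine le_trans ?_ (hG.log_rpow_mul_card_le_card_extNbhd_inter h hΓG hU le_degree
      (hsmall.le.trans (by gcongr)))
    gcongr
  · exact hG.eleven_mul_card_le_card_extNbhd_inter h hΓG hU le_degree
      (hcard.trans (mul_le_mul_of_nonneg_left card_sdiff_le h.beta_pos.le))

lemma IsTypical.inFamilyL (hG : IsTypical ε β p G) (h : IsAdmissible ε β n p) (hΓG : Γ ≤ G)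
    (hΓ : IsBackbone Γ (lowDegSet n (n * p / 100) G) ⌈1200 * β * (n * p)⌉₊ (β * n / 2)
      ((1 / 3 - 28 * β) * n)) :
    InFamilyL n β Γ (univ \ lowDegSet n (n * p / 100) G) (lowDegSet n (n * p / 100) G) := by
  set D := lowDegSet n (n * p / 100) G
  have card_sdiff_ge : (1 - β) * n ≤ #(univ \ D) := by
    have : (n : ℝ) ≤ #(univ \ D) + #D := by
      exact_mod_cast (Fintype.card_fin n).ge.trans (Finset.card_le_card_sdiff_add_card)
    linarith [hG.card_lowDegSet_le, h.rpow_le_beta_mul]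
  have lt_length : ∀ u ∈ D, ∀ v ∈ D, ∀ q : Γ.Walk u v, q.IsTrail → 0 < q.length →
      2 * Real.log n / (3 * Real.log (Real.log n)) < q.length := fun u hu v hv q hq hpos => by
    simpa only [Walk.length_map] using hG.lt_length_of_isTrail u hu v hv (q.mapLe hΓG)
      (hq.mapLe hΓG) (by simpa only [Walk.length_map] using hpos)
  exact ⟨Finset.sdiff_disjoint, Finset.sdiff_union_of_subset (Finset.subset_univ D),
    hG.card_lowDegSet_le, hΓ.two_le, fun u hu v hv q hq => lt_length u hu v hv q hq.isTrail,
    fun u hu q hq => lt_length u hu u hu q hq.isTrail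
      ((by norm_num : 0 < 3).trans_le hq.three_le_length),
    hG.isExpander_induce h hΓG card_sdiff_ge hΓ⟩

lemma IsTypical.exists_inFamilyL (hG : IsTypical ε β p G) (h : IsAdmissible ε β n p)
    (hlow : ∀ v, (G.degree v : ℝ) < n * p / 100 → (H.degree v : ℝ) ≤ G.degree v - 2)
    (hhigh : ∀ v, n * p / 100 ≤ G.degree v → (H.degree v : ℝ) ≤ (1 / 3 - ε) * G.degree v) :
    ∃ Γ ≤ G \ H,
      InFamilyL n β Γ (univ \ lowDegSet n (n * p / 100) G) (lowDegSet n (n * p / 100) G) ∧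
      (edgeCount Γ : ℝ) ≤ 2 * 10 ^ 6 * β * ((n : ℝ) ^ 2 * p) ∧
      ∀ E₀ : Finset (Sym2 (Fin n)), (E₀ : Set (Sym2 (Fin n))) ⊆ G.edgeSet →
        InFamilyL n β (Γ ⊔ fromEdgeSet (E₀ : Set (Sym2 (Fin n))))
          (univ \ lowDegSet n (n * p / 100) G) (lowDegSet n (n * p / 100) G) := by
  have mem_low : ∀ {v}, v ∈ lowDegSet n (n * p / 100) G ↔ (G.degree v : ℝ) < n * p / 100 :=
    Finset.mem_filter_univ _
  have le_degree : ∀ v ∉ lowDegSet n (n * p / 100) G, n * p / 100 ≤ (G.degree v : ℝ) :=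
    fun v hv => not_lt.1 fun hlt => hv (mem_low.2 hlt)
  obtain ⟨T, hT, card_T, meets_cuts⟩ :=
    hG.exists_edges_meeting_cuts h fun v hv => hhigh v (le_degree v hv)
  obtain ⟨Γ, hΓ, backbone, edgeCount_le⟩ := exists_le_isBackbone_of_forall_exists_mem
    h.two_le_ceil
    -- `convert` identifies two `Fintype` instances on the neighbour sets of `G \ H`.
    (fun v hv => by
      convert hG.two_le_card_neighborFinset_sdiff_inter h hv (hlow v (mem_low.1 hv)))
    (fun v hv => by
      convert hG.ceil_le_card_neighborFinset_sdiff_inter h (le_degree v hv)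
        (hhigh v (le_degree v hv))) hT meets_cuts
  have hΓG : Γ ≤ G := hΓ.trans sdiff_le
  refine ⟨Γ, hΓ, hG.inFamilyL h hΓG backbone, le_trans ?_ h.mul_ceil_add_ceil_le, fun E₀ hE₀ =>
    hG.inFamilyL h (sup_le hΓG ?_)
      (backbone.mono le_sup_left)⟩
  · rw [Fintype.card_fin] at edgeCount_le
    exact_mod_cast edgeCount_le.trans (Nat.add_le_add_left card_T _)
  · exact (fromEdgeSet_mono hE₀).trans_eq (fromEdgeSet_edgeSet G)

end TypicalGraphs

section SubgraphsOfRandomGraphs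

variable {p : ℕ → ℝ} {ε β : ℝ}

lemma log_rpow_le_self {n : ℕ} (hn : 1 ≤ Real.log n) : Real.log n ^ (0.8 : ℝ) ≤ Real.log n :=
  (Real.rpow_le_rpow_of_exponent_le hn (by norm_num)).trans_eq (Real.rpow_one _)

lemma eventually_natCast_rpow_le_mul (hβ : 0 < β) :
    ∀ᶠ n : ℕ in atTop, (n : ℝ) ^ (0.09 : ℝ) ≤ β * n := by
  filter_upwards [(tendsto_natCast_rpow_atTop (a := 0.91) (by norm_num)).eventually_ge_atTop
    (1 / β), eventually_gt_atTop 0] with n hn hn0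
  have hn0 : (0 : ℝ) < n := Nat.cast_pos.2 hn0
  rw [div_le_iff₀' hβ] at hn
  calc (n : ℝ) ^ (0.09 : ℝ) = 1 * (n : ℝ) ^ (0.09 : ℝ) := (one_mul _).symm
    _ ≤ β * (n : ℝ) ^ (0.91 : ℝ) * (n : ℝ) ^ (0.09 : ℝ) := by gcongr
    _ = β * n := by
      rw [mul_assoc, ← Real.rpow_add hn0]
      norm_num

lemma eventually_two_le_log_div :
    ∀ᶠ n : ℕ in atTop, 2 ≤ 2 * Real.log n / (3 * Real.log (Real.log n)) := by
  filter_upwards [tendsto_log_natCast_atTop.eventually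
      (Real.isLittleO_log_id_atTop.bound (by norm_num : (0 : ℝ) < 1 / 3)),
    tendsto_log_natCast_atTop.eventually_ge_atTop 0,
    (Real.tendsto_log_atTop.comp tendsto_log_natCast_atTop).eventually_ge_atTop 1]
    with n hlog hn hlog_log
  rw [id, Real.norm_of_nonneg hn] at hlog
  have hlog_log : 1 ≤ Real.log (Real.log n) := hlog_log
  rw [le_div_iff₀ (by linarith)]
  linarith [Real.le_norm_self (Real.log (Real.log n))]

lemma eventually_one_add_log_rpow_mul_le :
    ∀ᶠ n : ℕ in atTop,
      (1 + Real.log n ^ (0.8 : ℝ)) * (n : ℝ) ^ (0.1 : ℝ) ≤ (n : ℝ) ^ (0.11 : ℝ) := by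
  filter_upwards [tendsto_log_natCast_atTop.eventually_ge_atTop 1, eventually_gt_atTop 0,
    eventually_log_natCast_le_mul_rpow (a := 0.01) (by norm_num) (one_half_pos (α := ℝ))]
    with n hlog hn hlog_le
  have hn : (0 : ℝ) < n := Nat.cast_pos.2 hn
  calc (1 + Real.log n ^ (0.8 : ℝ)) * (n : ℝ) ^ (0.1 : ℝ)
      ≤ (n : ℝ) ^ (0.01 : ℝ) * (n : ℝ) ^ (0.1 : ℝ) := by
        gcongr
        linarith [log_rpow_le_self hlog]
    _ = (n : ℝ) ^ (0.11 : ℝ) := by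
      rw [← Real.rpow_add hn]
      norm_num

lemma eventually_rpow_mul_one_add_log_rpow_le (hd : ∀ᶠ n : ℕ in atTop, Real.log n ≤ n * p n)
    {c : ℝ} (hc : 0 < c) :
    ∀ᶠ n : ℕ in atTop,
      (n * p n) ^ (0.15 : ℝ) * (1 + Real.log n ^ (0.8 : ℝ)) ≤ c * (n * p n) := by
  have mean_tendsto : Tendsto (fun n : ℕ => n * p n) atTop atTop :=
    tendsto_atTop_mono' _ hd tendsto_log_natCast_atTop
  filter_upwards [hd, mean_tendsto.eventually_ge_atTop 1,
    ((tendsto_rpow_atTop (by norm_num : (0 : ℝ) < 0.05)).comp mean_tendsto).eventually_ge_atTop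
      (2 / c)] with n hd hmean hpow
  set d := n * p n
  have d_pos : 0 < d := by linarith
  have one_le : 1 ≤ d ^ (0.8 : ℝ) := Real.one_le_rpow hmean (by norm_num)
  have hpow : 2 ≤ c * d ^ (0.05 : ℝ) := (div_le_iff₀' hc).1 hpow
  calc d ^ (0.15 : ℝ) * (1 + Real.log n ^ (0.8 : ℝ))
      ≤ d ^ (0.15 : ℝ) * (d ^ (0.8 : ℝ) + d ^ (0.8 : ℝ)) := by gcongr
    _ = 2 * (d ^ (0.15 : ℝ) * d ^ (0.8 : ℝ)) := by ring
    _ ≤ c * d ^ (0.05 : ℝ) * (d ^ (0.15 : ℝ) * d ^ (0.8 : ℝ)) := by gcongr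
    _ = c * d := by
      rw [mul_assoc, ← Real.rpow_add d_pos, ← Real.rpow_add d_pos]
      norm_num

lemma eventually_isAdmissible (hd : ∀ᶠ n : ℕ in atTop, Real.log n ≤ n * p n) (hε : 0 < ε)
    (hε3 : ε ≤ 1 / 3) (hβ : 0 < β) (hβ6 : β ≤ 1 / 10 ^ 6) (hβε : β ≤ ε / 100) :
    ∀ᶠ n : ℕ in atTop, IsAdmissible ε β n (p n) := by
  have mean_tendsto : Tendsto (fun n : ℕ => n * p n) atTop atTop :=
    tendsto_atTop_mono' _ hd tendsto_log_natCast_atTop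
  have mul_mean_tendsto {c : ℝ} (hc : 0 < c) : Tendsto (fun n : ℕ => c * (n * p n)) atTop atTop :=
    mean_tendsto.const_mul_atTop hc
  have mul_tendsto : Tendsto (fun n : ℕ => β * n) atTop atTop :=
    tendsto_natCast_atTop_atTop.const_mul_atTop hβ
  filter_upwards [mul_tendsto.eventually_ge_atTop 4, eventually_natCast_rpow_le_mul hβ,
    eventually_two_le_log_div, eventually_one_add_log_rpow_mul_le,
    mean_tendsto.eventually_ge_atTop 1000,
    (mul_mean_tendsto (mul_pos (by norm_num : (0 : ℝ) < 100) hβ)).eventually_ge_atTop 1,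
    (mul_mean_tendsto (mul_pos (by norm_num : (0 : ℝ) < 1000) hβ)).eventually_ge_atTop
      (8 / (ε * β) + 1),
    eventually_rpow_mul_one_add_log_rpow_le hd (mul_pos (by norm_num : (0 : ℝ) < 600) hβ)]
    with n h4 hrpow hlog hlogn h1000 h1 hdiv hmean
  exact ⟨hε, hε3, hβ, hβ6, hβε, h4, hrpow, hlog, hlogn, h1000, h1, hdiv, hmean⟩

lemma whp_isTypical (hp : ∀ n, p n ∈ Set.Icc (0 : ℝ) 1)
    (hd : ∀ᶠ n : ℕ in atTop, Real.log n ≤ n * p n) (hε : 0 < ε) (hε10 : ε ≤ 10) (hβ : 0 < β)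
    (hβ84 : 28 * β < 1 / 3) : WHP p fun n G => IsTypical ε β (p n) G := by
  have mean_tendsto : Tendsto (fun n : ℕ => n * p n) atTop atTop :=
    tendsto_atTop_mono' _ hd tendsto_log_natCast_atTop
  have hδ : 0 < ε / 10 := by positivity
  have hz : 0 < 1 / 3 - 28 * β := sub_pos.2 hβ84
  refine .mono hp ((whp_card_lowDegSet_le hp hd).and hp <|
    (whp_lt_length_of_isTrail hp hd).and hp <|
    (whp_eIn_lt_rpow_mul_card hp mean_tendsto).and hp <|
    (whp_eIn_lt_mul_card hp mean_tendsto hβ).and hp <|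
    (whp_lt_eBetween hp mean_tendsto hδ (mul_pos (half_pos hβ) hz)).and hp
    (whp_sum_degree_lt hp mean_tendsto hδ ((div_le_one (by norm_num)).2 hε10) (half_pos hβ)))
    (Eventually.of_forall fun n G ⟨hD, htrail, hsmall, hmid, hcut, hdeg⟩ =>
      ⟨hD, htrail, hsmall, hmid, fun U Z hUZ hU hZ => hcut U Z hUZ ?_,
        fun U hU => hdeg U (by linarith)⟩)
  calc β / 2 * (1 / 3 - 28 * β) * (n : ℝ) ^ 2 = β * n / 2 * ((1 / 3 - 28 * β) * n) := by ring
    _ ≤ #U * #Z := by gcongr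

theorem stmt15_general (ε : ℝ) (hε : 0 < ε) :
    ∃ β0 : ℝ, 0 < β0 ∧ ∀ β : ℝ, 0 < β → β ≤ β0 →
      ∀ p : ℕ → ℝ, (∀ n, p n ∈ Set.Icc (0 : ℝ) 1) →
        (∀ᶠ n : ℕ in atTop, Real.log n ≤ n * p n) →
        WHP p (fun n G =>
          ∀ H : SimpleGraph (Fin n),
            (∀ v : Fin n,
              ((G.degree v : ℝ) < n * p n / 100 → (H.degree v : ℝ) ≤ (G.degree v : ℝ) - 2) ∧
              ((n : ℝ) * p n / 100 ≤ (G.degree v : ℝ) →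
                (H.degree v : ℝ) ≤ (1 / 3 - ε) * (G.degree v : ℝ))) →
            ∃ Γ0 : SimpleGraph (Fin n), Γ0 ≤ G \ H ∧
              InFamilyL n β Γ0 (Finset.univ \ lowDegSet n (n * p n / 100) G)
                (lowDegSet n (n * p n / 100) G) ∧
              (edgeCount Γ0 : ℝ) ≤ 2 * 10 ^ 6 * β * ((n : ℝ) ^ 2 * p n) ∧
              ∀ E0 : Finset (Sym2 (Fin n)), (E0 : Set (Sym2 (Fin n))) ⊆ G.edgeSet →
                InFamilyL n β (Γ0 ⊔ fromEdgeSet (E0 : Set (Sym2 (Fin n))))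
                  (Finset.univ \ lowDegSet n (n * p n / 100) G)
                  (lowDegSet n (n * p n / 100) G)) := by
  set ε' := min ε (1 / 3)
  have hε' : 0 < ε' := lt_min hε (by norm_num)
  have hε'3 : ε' ≤ 1 / 3 := min_le_right _ _
  refine ⟨min (1 / 10 ^ 6) (ε' / 100), by positivity, fun β hβ hβ0 p hp hd => ?_⟩
  obtain ⟨hβ6, hβε⟩ := le_min_iff.1 hβ0
  refine .mono hp (whp_isTypical hp hd hε' (hε'3.trans (by norm_num)) hβ ?_) ?_
  · linarith [hβ6.trans (by norm_num : (1 : ℝ) / 10 ^ 6 ≤ 1 / 100)]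
  filter_upwards [eventually_isAdmissible hd hε' hε'3 hβ hβ6 hβε] with n h G hG H hH
  refine hG.exists_inFamilyL h (fun v => (hH v).1) fun v hv => ((hH v).2 hv).trans ?_
  gcongr
  exact min_le_left _ _

end SubgraphsOfRandomGraphs

/-- Corollary 4.9: for every `ε > 0` there is `β₀ > 0` such that for `0 < β ≤ β₀` and
`p = (ln n + ln ln n + ω(1))/n`, w.h.p.: for every `H ⊆ G` with `d_H ≤ d̃(t, ε)`
(`t = np/100`), the graph `G - H` contains `Γ₀ ∈ 𝓛(n, β)` with at most `2·10⁶ β n² p`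
edges, and `Γ₀ + E₀ ∈ 𝓛(n, β)` for every `E₀ ⊆ E(G)`, with witnessing partition
`V = V₁ ∪ D_t(G)`. -/
theorem stmt15 (ε : ℝ) (hε : 0 < ε) :
    ∃ β0 : ℝ, 0 < β0 ∧ ∀ β : ℝ, 0 < β → β ≤ β0 →
      ∀ p : ℕ → ℝ, (∀ n, 0 ≤ p n) → (∀ n, p n ≤ 1) →
        Tendsto (fun n : ℕ => n * p n - Real.log n - Real.log (Real.log n)) atTop atTop →
        WHP p (fun n G =>
          ∀ H : SimpleGraph (Fin n), H ≤ G →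
            (∀ v : Fin n,
              ((G.degree v : ℝ) < n * p n / 100 → (H.degree v : ℝ) ≤ (G.degree v : ℝ) - 2) ∧
              ((n : ℝ) * p n / 100 ≤ (G.degree v : ℝ) →
                (H.degree v : ℝ) ≤ (1 / 3 - ε) * (G.degree v : ℝ))) →
            ∃ Γ0 : SimpleGraph (Fin n), Γ0 ≤ G \ H ∧
              InFamilyL n β Γ0 (Finset.univ \ lowDegSet n (n * p n / 100) G)
                (lowDegSet n (n * p n / 100) G) ∧
              (edgeCount Γ0 : ℝ) ≤ 2 * 10 ^ 6 * β * ((n : ℝ) ^ 2 * p n) ∧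
              ∀ E0 : Finset (Sym2 (Fin n)), (E0 : Set (Sym2 (Fin n))) ⊆ G.edgeSet →
                InFamilyL n β (Γ0 ⊔ fromEdgeSet (E0 : Set (Sym2 (Fin n))))
                  (Finset.univ \ lowDegSet n (n * p n / 100) G)
                  (lowDegSet n (n * p n / 100) G)) := by
  obtain ⟨β0, hβ0, general⟩ := stmt15_general ε hε
  refine ⟨β0, hβ0, fun β hβ hββ0 p h0 h1 hmean => ?_⟩
  have log_le_mean : ∀ᶠ n : ℕ in atTop, Real.log n ≤ n * p n := by
    filter_upwards [hmean.eventually_ge_atTop 0,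
      (Real.tendsto_log_atTop.comp tendsto_log_natCast_atTop).eventually_ge_atTop 0]
      with n hn hlog_log
    have : 0 ≤ Real.log (Real.log n) := hlog_log
    linarith
  have hp : ∀ n, p n ∈ Set.Icc (0 : ℝ) 1 := fun n => ⟨h0 n, h1 n⟩
  exact (general β hβ hββ0 p hp log_le_mean).mono hp
    (Eventually.of_forall fun n G h H _ => h H)
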